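/- arXiv:2005.07056 — 3 statements merged into one kernel-verified Lean document; each statement's English description precedes it below -/
import Mathlib

section
/- Let n, r, N be positive integers with N ≥ r. Let A_1, …, A_r ∈ M_n(ℂ) be linearly independent matrices satisfying Σ_{k=1}^{r} A_kᴴ A_k = 1_n, define Φ : M_n(ℂ) → M_n(ℂ) by Φ(X) = Σ_{k=1}^{r} A_k X A_kᴴ, and define Ψ : M_n(ℂ) → M_r(ℂ) by Ψ(X)_{j,k} = Tr(A_j X A_kᴴ). Then the following are equivalent: (1) there exist unitary matrices U_1, …, U_N ∈ M_n(ℂ) and nonnegative reals p_1, …, p_N with Σ_i p_i = 1 such that Φ(X) = Σ_{i=1}^{N} p_i U_i X U_iᴴ for every X ∈ M_n(ℂ); (2) there exist a matrix V ∈ M_{N,r}(ℂ) with VᴴV = 1_r and nonzero pairwise orthogonal vectors v_1, …, v_N ∈ ℂ^N such that ⟨v_i, V Ψ(X) Vᴴ v_i⟩ = 0 for every i ∈ {1,…,N} and every X ∈ M_n(ℂ) with Tr X = 0. -/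
open Matrix BigOperators

/-!
Kraus families of the same map have the same Choi matrix, so any family `B` of at least as many
operators as `A` with the same map as `A` is `∑ₖ Wᵢₖ Aₖ` for an isometry `W`; this replacement
turns the complementary map `Ψ` into `W Ψ Wᴴ`. A map preserving the trace of `1` is mixed unitary
exactly when it has Kraus operators `B` with every `Bᵢᴴ Bᵢ` scalar, that is, trace-orthogonal to all
traceless `X`, and `Tr (Bᵢᴴ Bᵢ X)` is the `i`-th diagonal entry of `W Ψ(X) Wᴴ`. So `Φ` is mixed
unitary iff, for some isometry `W`, the standard basis consists of trace vectors for the traceless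
part of `W Ψ Wᴴ`. Any other orthogonal basis of trace vectors is rotated to the standard one by a
unitary, which is absorbed into the isometry.
-/

section Factorization

lemma conjTranspose_mul_mul_eq_of_isometry {R ι κ p : Type*} [Semiring R] [StarRing R] [Fintype ι]
    [Fintype κ] [DecidableEq κ] {V : Matrix ι κ R} (hV : Vᴴ * V = 1) (A : Matrix κ p R) :
    (V * A)ᴴ * (V * A) = Aᴴ * A := by
  rw [conjTranspose_mul, Matrix.mul_assoc, ← Matrix.mul_assoc Vᴴ, hV, Matrix.one_mul]

variable {𝕜 : Type*} [RCLike 𝕜]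

lemma exists_linearIsometry_apply_eq_of_norm_eq {E F : Type*} [AddCommGroup E] [Module 𝕜 E]
    [NormedAddCommGroup F] [InnerProductSpace 𝕜 F] [FiniteDimensional 𝕜 F] {f g : E →ₗ[𝕜] F}
    (h : ∀ x, ‖f x‖ = ‖g x‖) : ∃ L : F →ₗᵢ[𝕜] F, ∀ x, L (f x) = g x := by
  obtain ⟨σ, hσ⟩ := f.rangeRestrict.exists_rightInverse_of_surjective f.range_rangeRestrict
  have hfσ (y : f.range) : f (σ y) = y := congrArg Subtype.val (LinearMap.congr_fun hσ y)
  let L : f.range →ₗᵢ[𝕜] F := ⟨g ∘ₗ σ, fun y => by simp [← h, hfσ]⟩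
  refine ⟨L.extend, fun x => ?_⟩
  have hsub : g (σ (f.rangeRestrict x) - x) = 0 := by
    rw [← norm_eq_zero, ← h, norm_eq_zero, map_sub, hfσ, LinearMap.codRestrict_apply, sub_self]
  calc L.extend (f x) = g (σ (f.rangeRestrict x)) := L.extend_apply (f.rangeRestrict x)
    _ = g x := sub_eq_zero.1 (by rw [← map_sub, hsub])

lemma exists_unitary_mul_eq_of_conjTranspose_mul_self_eq {ι p : Type*} [Fintype ι] [DecidableEq ι]
    [Finite p] {A B : Matrix ι p 𝕜} (h : Aᴴ * A = Bᴴ * B) :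
    ∃ U ∈ unitaryGroup ι 𝕜, U * A = B := by
  classical
  have := Fintype.ofFinite p
  have hnorm (x : EuclideanSpace 𝕜 p) : ‖toEuclideanLin A x‖ = ‖toEuclideanLin B x‖ := by
    have hinner : inner 𝕜 (toEuclideanLin A x) (toEuclideanLin A x) =
        inner 𝕜 (toEuclideanLin B x) (toEuclideanLin B x) := by
      simp only [← LinearMap.adjoint_inner_right, ← toEuclideanLin_conjTranspose_eq_adjoint,
        ← LinearMap.comp_apply, ← toLpLin_mul_same, h]
    rw [@norm_eq_sqrt_re_inner 𝕜, hinner, ← @norm_eq_sqrt_re_inner 𝕜]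
  obtain ⟨L, hL⟩ := exists_linearIsometry_apply_eq_of_norm_eq hnorm
  refine ⟨toEuclideanLin.symm L.toLinearMap, mem_unitaryGroup_iff'.2 ?_, ?_⟩
  · apply toEuclideanLin.injective
    rw [star_eq_conjTranspose, toLpLin_mul_same, toEuclideanLin_conjTranspose_eq_adjoint,
      LinearEquiv.apply_symm_apply, toLpLin_one]
    refine LinearMap.ext fun x => ext_inner_left 𝕜 fun y => ?_
    simp
  · apply toEuclideanLin.injective
    rw [toLpLin_mul_same, LinearEquiv.apply_symm_apply]
    exact LinearMap.ext hL

lemma exists_isometry_mul_eq_of_conjTranspose_mul_self_eq {ι κ p : Type*} [Fintype ι]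
    [Fintype κ] [DecidableEq κ] [Finite p] (hcard : Fintype.card κ ≤ Fintype.card ι)
    {A : Matrix κ p 𝕜} {B : Matrix ι p 𝕜} (h : Aᴴ * A = Bᴴ * B) :
    ∃ W : Matrix ι κ 𝕜, Wᴴ * W = 1 ∧ W * A = B := by
  classical
  obtain ⟨e⟩ := Function.Embedding.nonempty_of_card_le hcard
  let J : Matrix ι κ 𝕜 := (1 : Matrix ι ι 𝕜).submatrix id e
  have hJ : Jᴴ * J = 1 := by
    rw [conjTranspose_submatrix, conjTranspose_one, ← submatrix_mul _ _ _ _ _ Function.bijective_id,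
      Matrix.one_mul, submatrix_one e e.injective]
  obtain ⟨U, hU, hUB⟩ := exists_unitary_mul_eq_of_conjTranspose_mul_self_eq
    ((conjTranspose_mul_mul_eq_of_isometry hJ A).trans h)
  refine ⟨U * J, ?_, by rw [Matrix.mul_assoc, hUB]⟩
  rw [conjTranspose_mul_mul_eq_of_isometry (mem_unitaryGroup_iff'.1 hU), hJ]

end Factorization

section ScalarMatrices

lemma ofReal_sqrt_mul_self {𝕜 : Type*} [RCLike 𝕜] {p : ℝ} (hp : 0 ≤ p) :
    ((√p : ℝ) : 𝕜) * ((√p : ℝ) : 𝕜) = p := by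
  rw [← RCLike.ofReal_mul, Real.mul_self_sqrt hp]

lemma exists_eq_smul_one_iff_trace_mul_eq_zero {n R : Type*} [Fintype n] [DecidableEq n]
    [CommRing R] {M : Matrix n n R} :
    (∃ c : R, M = c • 1) ↔ ∀ X : Matrix n n R, X.trace = 0 → (M * X).trace = 0 := by
  refine ⟨?_, fun h => ?_⟩
  · rintro ⟨c, rfl⟩ X hX
    rw [Matrix.smul_mul, Matrix.one_mul, trace_smul, hX, smul_zero]
  -- `M` is trace-orthogonal to every commutator, hence central.
  have hcomm (Y : Matrix n n R) : Commute Y M := by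
    refine ext_iff_trace_mul_right.2 fun Z => ?_
    have hZ : (M * (Z * Y - Y * Z)).trace = 0 :=
      h _ (by rw [trace_sub, trace_mul_comm, sub_self])
    rw [Matrix.mul_sub, trace_sub, sub_eq_zero] at hZ
    rw [Matrix.mul_assoc, trace_mul_comm, Matrix.mul_assoc, hZ, Matrix.mul_assoc]
  obtain ⟨c, hc⟩ := mem_range_scalar_iff_commute_single'.2 fun i j => hcomm (single i j 1)
  exact ⟨c, by rw [← hc, scalar_apply, ← smul_one_eq_diagonal]⟩

variable {𝕜 n : Type*} [RCLike 𝕜] [Fintype n] [DecidableEq n]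

open scoped ComplexOrder in
lemma exists_conjTranspose_mul_self_eq_smul_one_iff [Nonempty n] {B : Matrix n n 𝕜} :
    (∃ c : 𝕜, Bᴴ * B = c • 1) ↔
      ∃ U ∈ unitaryGroup n 𝕜, ∃ p : ℝ, 0 ≤ p ∧ B = ((√p : ℝ) : 𝕜) • U := by
  constructor
  · rintro ⟨c, hc⟩
    have hc_nonneg : 0 ≤ c := by
      simpa [hc] using
        (posSemidef_conjTranspose_mul_self B).diag_nonneg (i := Classical.arbitrary n)
    obtain ⟨p, hp, rfl⟩ := RCLike.nonneg_iff_exists_ofReal.1 hc_nonneg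
    obtain rfl | hp_pos := hp.eq_or_lt
    · exact ⟨1, one_mem _, 0, le_rfl, by simpa using hc⟩
    · have hs : ((√p : ℝ) : 𝕜) ≠ 0 := RCLike.ofReal_ne_zero.2 (Real.sqrt_pos.2 hp_pos).ne'
      refine ⟨((√p : ℝ) : 𝕜)⁻¹ • B, mem_unitaryGroup_iff'.2 ?_, p, hp,
        (smul_inv_smul₀ hs B).symm⟩
      rw [star_smul, star_inv₀, RCLike.star_def, RCLike.conj_ofReal, smul_mul_smul_comm,
        star_eq_conjTranspose, hc, smul_smul, ← mul_inv, ofReal_sqrt_mul_self hp,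
        inv_mul_cancel₀ (RCLike.ofReal_ne_zero.2 hp_pos.ne'), one_smul]
  · rintro ⟨U, hU, p, hp, rfl⟩
    refine ⟨p, ?_⟩
    rw [conjTranspose_smul, RCLike.star_def, RCLike.conj_ofReal, smul_mul_smul_comm,
      ofReal_sqrt_mul_self hp, ← star_eq_conjTranspose, mem_unitaryGroup_iff'.1 hU]

end ScalarMatrices

section OrthogonalVectors

variable {𝕜 ι : Type*} [RCLike 𝕜] [Fintype ι] [DecidableEq ι]

open scoped ComplexOrder in
lemma exists_unitary_row_eq_smul_star_of_orthogonal {v : ι → ι → 𝕜} (hv : ∀ i, v i ≠ 0)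
    (horth : ∀ i j, i ≠ j → star (v i) ⬝ᵥ v j = 0) :
    ∃ Q ∈ unitaryGroup ι 𝕜, ∃ s : ι → 𝕜, ∀ i, Q i = s i • star (v i) := by
  choose q hq hvq using fun i =>
    RCLike.pos_iff_exists_ofReal.1 (dotProduct_star_self_pos_iff.2 (hv i))
  let s (i : ι) : 𝕜 := ((√(q i) : ℝ) : 𝕜)⁻¹
  have hs (i : ι) : s i * star (s i) = (q i : 𝕜)⁻¹ := by
    rw [RCLike.star_def, map_inv₀, RCLike.conj_ofReal, ← mul_inv, ofReal_sqrt_mul_self (hq i).le]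
  let Q : Matrix ι ι 𝕜 := of fun i => s i • star (v i)
  have hQ (i j : ι) : (Q * star Q) i j = s i * star (s j) * (star (v i) ⬝ᵥ v j) := by
    calc (Q * star Q) i j = (s i • star (v i)) ⬝ᵥ star (s j • star (v j)) := rfl
      _ = s i * star (s j) * (star (v i) ⬝ᵥ v j) := by
        rw [star_smul, star_star, smul_dotProduct, dotProduct_smul, smul_smul, smul_eq_mul]
  refine ⟨Q, mem_unitaryGroup_iff.2 (Matrix.ext fun i j => ?_), s, fun _ => rfl⟩
  rw [hQ]
  obtain rfl | hij := eq_or_ne i j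
  · rw [hs, ← hvq, inv_mul_cancel₀ (RCLike.ofReal_ne_zero.2 (hq i).ne'), one_apply_eq]
  · rw [horth i j hij, mul_zero, one_apply_ne hij]

end OrthogonalVectors

section KrausFamilies

/-- The completely positive map `X ↦ ∑ₖ Aₖ X Aₖᴴ` with Kraus operators `A`. -/
def krausMap {κ m n R : Type*} [Fintype κ] [Fintype n] [NonUnitalSemiring R] [Star R]
    (A : κ → Matrix m n R) (X : Matrix n n R) : Matrix m m R :=
  ∑ k, A k * X * (A k)ᴴ

/-- The complementary map `X ↦ (Tr (Aⱼ X Aₖᴴ))ⱼₖ` of `krausMap A`, determined by the choice of the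
Kraus operators `A`. -/
def complementaryMap {κ m n R : Type*} [Fintype m] [Fintype n] [NonUnitalSemiring R] [Star R]
    (A : κ → Matrix m n R) (X : Matrix n n R) : Matrix κ κ R :=
  of fun j k => (A j * X * (A k)ᴴ).trace

/-- The family of linear combinations `∑ₖ Wᵢₖ Aₖ`. When `W` is an isometry this is a change of Kraus
operators that leaves `krausMap A` unchanged. -/
def krausMix {ι κ m n R : Type*} [Fintype κ] [Semiring R] (W : Matrix ι κ R)
    (A : κ → Matrix m n R) (i : ι) : Matrix m n R :=
  ∑ k, W i k • A k

/-- The matrix whose `k`-th row is the vectorization of `Aₖ`. Its Gram matrix is the Choi matrix of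
`krausMap A`, up to transposition and the order of the indices. -/
def krausMatrix {κ m n R : Type*} (A : κ → Matrix m n R) : Matrix κ (n × m) R :=
  of fun k => vec (A k)

lemma krausMatrix_injective {κ m n R : Type*} :
    Function.Injective (krausMatrix : (κ → Matrix m n R) → Matrix κ (n × m) R) :=
  fun _ _ h => funext fun k => vec_inj.1 (congrFun h k)

lemma krausMatrix_krausMix {ι κ m n R : Type*} [Fintype κ] [Semiring R] (W : Matrix ι κ R)
    (A : κ → Matrix m n R) : krausMatrix (krausMix W A) = W * krausMatrix A := by
  ext i p
  simp [krausMatrix, krausMix, mul_apply, Matrix.sum_apply]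

open scoped Kronecker in
lemma complementaryMap_eq_krausMatrix_mul {κ m n R : Type*} [Fintype m] [DecidableEq m] [Fintype n]
    [CommSemiring R] [StarRing R] (A : κ → Matrix m n R) (X : Matrix n n R) :
    complementaryMap A X = krausMatrix A * (X ⊗ₖ (1 : Matrix m m R)) * (krausMatrix A)ᴴ := by
  ext j k
  simp only [complementaryMap, krausMatrix, trace, diag_apply, of_apply, mul_apply,
    conjTranspose_apply, vec, kroneckerMap_apply, one_apply, Fintype.sum_prod_type, mul_ite,
    mul_one, mul_zero, Finset.sum_ite_eq', Finset.mem_univ, if_true]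
  exact Finset.sum_comm

lemma exists_conjTranspose_mul_self_eq_smul_one_iff_complementaryMap {ι m n R : Type*}
    [Fintype m] [Fintype n] [DecidableEq n] [CommRing R] [StarRing R] {B : ι → Matrix m n R}
    {i : ι} :
    (∃ c : R, (B i)ᴴ * B i = c • 1) ↔
      ∀ X : Matrix n n R, X.trace = 0 → complementaryMap B X i i = 0 := by
  rw [exists_eq_smul_one_iff_trace_mul_eq_zero]
  refine forall₂_congr fun X _ => ?_
  rw [complementaryMap, of_apply, trace_mul_comm (B i * X), Matrix.mul_assoc]

variable {ι κ m n R : Type*} [Fintype κ] [Fintype n] [CommSemiring R] [StarRing R]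

lemma krausMap_apply (A : κ → Matrix m n R) (X : Matrix n n R) (i i' : m) :
    krausMap A X i i' =
      ∑ j', ∑ j, X j j' * ((krausMatrix A)ᴴ * krausMatrix A) (j', i') (j, i) := by
  simp only [krausMap, krausMatrix, mul_apply, Matrix.sum_apply, Finset.sum_mul, Finset.mul_sum,
    conjTranspose_apply, of_apply, vec]
  rw [Finset.sum_comm]
  refine Finset.sum_congr rfl fun j' _ => ?_
  rw [Finset.sum_comm]
  exact Finset.sum_congr rfl fun j _ => Finset.sum_congr rfl fun k _ => by ring

lemma krausMap_eq_krausMap_iff [Fintype ι] {A : κ → Matrix m n R} {B : ι → Matrix m n R} :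
    krausMap A = krausMap B ↔
      (krausMatrix A)ᴴ * krausMatrix A = (krausMatrix B)ᴴ * krausMatrix B := by
  classical
  refine ⟨fun h => ?_, fun h => ?_⟩
  · ext ⟨j', i'⟩ ⟨j, i⟩
    have happly := congrFun (congrFun (congrFun h (single j j' 1)) i) i'
    simpa [krausMap_apply, single_apply, ite_and] using happly
  · ext X i i'
    simp only [krausMap_apply, h]

lemma trace_krausMap [Fintype m] (A : κ → Matrix m n R) (X : Matrix n n R) :
    (krausMap A X).trace = ((∑ k, (A k)ᴴ * A k) * X).trace := by
  simp only [krausMap, trace_sum, Matrix.sum_mul]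
  exact Finset.sum_congr rfl fun k _ => by rw [trace_mul_comm, Matrix.mul_assoc]

lemma complementaryMap_krausMix [Fintype m] (W : Matrix ι κ R) (A : κ → Matrix m n R)
    (X : Matrix n n R) :
    complementaryMap (krausMix W A) X = W * complementaryMap A X * Wᴴ := by
  classical
  simp only [complementaryMap_eq_krausMatrix_mul, krausMatrix_krausMix, conjTranspose_mul,
    Matrix.mul_assoc]

lemma krausMap_eq_krausMap_iff_exists_isometry {𝕜 : Type*} [RCLike 𝕜] [Fintype ι] [Finite m]
    [DecidableEq κ] (hcard : Fintype.card κ ≤ Fintype.card ι) {A : κ → Matrix m n 𝕜}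
    {B : ι → Matrix m n 𝕜} :
    krausMap A = krausMap B ↔ ∃ W : Matrix ι κ 𝕜, Wᴴ * W = 1 ∧ krausMix W A = B := by
  rw [krausMap_eq_krausMap_iff]
  constructor
  · intro h
    obtain ⟨W, hW, hWA⟩ := exists_isometry_mul_eq_of_conjTranspose_mul_self_eq hcard h
    exact ⟨W, hW, krausMatrix_injective ((krausMatrix_krausMix W A).trans hWA)⟩
  · rintro ⟨W, hW, rfl⟩
    rw [krausMatrix_krausMix, conjTranspose_mul_mul_eq_of_isometry hW]

end KrausFamilies

section MixedUnitary

variable {𝕜 ι κ n : Type*} [RCLike 𝕜] [Fintype ι] [Fintype n]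

lemma krausMap_sqrt_smul (U : ι → Matrix n n 𝕜) {p : ι → ℝ} (hp : ∀ i, 0 ≤ p i)
    (X : Matrix n n 𝕜) :
    krausMap (fun i => ((√(p i) : ℝ) : 𝕜) • U i) X = ∑ i, (p i : 𝕜) • (U i * X * (U i)ᴴ) := by
  refine Finset.sum_congr rfl fun i _ => ?_
  rw [conjTranspose_smul, RCLike.star_def, RCLike.conj_ofReal, Matrix.smul_mul,
    smul_mul_smul_comm, ofReal_sqrt_mul_self (hp i)]

variable [DecidableEq n]

/-- A map is mixed unitary over `ι` if it is a convex combination, indexed by `ι`, of unitary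
conjugations. Some weights may vanish, so this bounds the mixed-unitary rank by the cardinality of
`ι`. -/
def IsMixedUnitary (ι : Type*) [Fintype ι] (Φ : Matrix n n 𝕜 → Matrix n n 𝕜) : Prop :=
  ∃ (U : ι → Matrix n n 𝕜) (p : ι → ℝ), (∀ i, U i ∈ unitaryGroup n 𝕜) ∧ (∀ i, 0 ≤ p i) ∧
    ∑ i, p i = 1 ∧ ∀ X, Φ X = ∑ i, (p i : 𝕜) • (U i * X * (U i)ᴴ)

lemma sum_eq_one_of_trace_sum_smul_unitary_eq [Nonempty n] {U : ι → Matrix n n 𝕜} {p : ι → ℝ}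
    (hU : ∀ i, U i ∈ unitaryGroup n 𝕜)
    (htrace : (∑ i, (p i : 𝕜) • (U i * 1 * (U i)ᴴ)).trace = (1 : Matrix n n 𝕜).trace) :
    ∑ i, p i = 1 := by
  have hconj (i : ι) : U i * 1 * (U i)ᴴ = 1 := by
    rw [Matrix.mul_one, ← star_eq_conjTranspose, mem_unitaryGroup_iff.1 (hU i)]
  simp only [hconj, ← Finset.sum_smul, trace_smul, smul_eq_mul, trace_one] at htrace
  have hcard : (Fintype.card n : 𝕜) ≠ 0 := Nat.cast_ne_zero.2 Fintype.card_ne_zero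
  exact_mod_cast (mul_eq_right₀ hcard).1 htrace

lemma isMixedUnitary_iff_exists_krausMap [Nonempty n] {Φ : Matrix n n 𝕜 → Matrix n n 𝕜}
    (hΦ : (Φ 1).trace = (1 : Matrix n n 𝕜).trace) :
    IsMixedUnitary ι Φ ↔
      ∃ B : ι → Matrix n n 𝕜, Φ = krausMap B ∧ ∀ i, ∃ c : 𝕜, (B i)ᴴ * B i = c • 1 := by
  simp only [exists_conjTranspose_mul_self_eq_smul_one_iff]
  constructor
  · rintro ⟨U, p, hU, hp, -, hΦU⟩
    refine ⟨fun i => ((√(p i) : ℝ) : 𝕜) • U i, funext fun X => ?_,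
      fun i => ⟨U i, hU i, p i, hp i, rfl⟩⟩
    rw [hΦU, krausMap_sqrt_smul U hp]
  · rintro ⟨B, rfl, hB⟩
    choose U hU p hp hBU using hB
    obtain rfl : B = fun i => ((√(p i) : ℝ) : 𝕜) • U i := funext hBU
    rw [krausMap_sqrt_smul U hp] at hΦ
    exact ⟨U, p, hU, hp, sum_eq_one_of_trace_sum_smul_unitary_eq hU hΦ, krausMap_sqrt_smul U hp⟩

variable [Fintype κ] [DecidableEq κ]

lemma isMixedUnitary_krausMap_iff_exists_isometry [Nonempty n]
    (hcard : Fintype.card κ ≤ Fintype.card ι) {A : κ → Matrix n n 𝕜}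
    (hsum : ∑ k, (A k)ᴴ * A k = 1) :
    IsMixedUnitary ι (krausMap A) ↔ ∃ W : Matrix ι κ 𝕜, Wᴴ * W = 1 ∧
      ∀ (i : ι) (X : Matrix n n 𝕜), X.trace = 0 → (W * complementaryMap A X * Wᴴ) i i = 0 := by
  have htrace : (krausMap A 1).trace = (1 : Matrix n n 𝕜).trace := by
    rw [trace_krausMap, hsum, Matrix.one_mul]
  simp only [isMixedUnitary_iff_exists_krausMap htrace,
    krausMap_eq_krausMap_iff_exists_isometry hcard,
    exists_conjTranspose_mul_self_eq_smul_one_iff_complementaryMap, ← complementaryMap_krausMix]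
  constructor
  · rintro ⟨_, ⟨W, hW, rfl⟩, hdiag⟩
    exact ⟨W, hW, hdiag⟩
  · rintro ⟨W, hW, hdiag⟩
    exact ⟨_, ⟨W, hW, rfl⟩, hdiag⟩

theorem stmt_2_general [Nonempty n] (hcard : Fintype.card κ ≤ Fintype.card ι)
    (A : κ → Matrix n n 𝕜) (hsum : ∑ k, (A k)ᴴ * A k = 1) :
    IsMixedUnitary ι (krausMap A) ↔
      ∃ (V : Matrix ι κ 𝕜) (v : ι → ι → 𝕜), Vᴴ * V = 1 ∧ (∀ i, v i ≠ 0) ∧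
        (∀ i j, i ≠ j → star (v i) ⬝ᵥ v j = 0) ∧
        ∀ (i : ι) (X : Matrix n n 𝕜), X.trace = 0 →
          star (v i) ⬝ᵥ ((V * complementaryMap A X * Vᴴ) *ᵥ v i) = 0 := by
  classical
  rw [isMixedUnitary_krausMap_iff_exists_isometry hcard hsum]
  constructor
  · rintro ⟨W, hW, hdiag⟩
    exact ⟨W, fun i => Pi.single i 1, hW, fun i => by simp, fun i j hij => by simp [hij],
      fun i X hX => by simpa using hdiag i X hX⟩
  · rintro ⟨V, v, hV, hv, horth, htr⟩
    obtain ⟨Q, hQ, s, hQv⟩ := exists_unitary_row_eq_smul_star_of_orthogonal hv horth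
    refine ⟨Q * V, ?_, fun i X hX => ?_⟩
    · rw [conjTranspose_mul_mul_eq_of_isometry (mem_unitaryGroup_iff'.1 hQ), hV]
    · calc (Q * V * complementaryMap A X * (Q * V)ᴴ) i i
          = (Q * (V * complementaryMap A X * Vᴴ) * Qᴴ) i i := by
            simp only [conjTranspose_mul, Matrix.mul_assoc]
        _ = Q i ⬝ᵥ ((V * complementaryMap A X * Vᴴ) *ᵥ star (Q i)) := mul_mul_apply _ _ _ i i
        _ = 0 := by
          rw [hQv, star_smul, star_star, mulVec_smul, smul_dotProduct, dotProduct_smul,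
            htr i X hX, smul_zero, smul_zero]

end MixedUnitary

/-- A channel `Φ` with linearly independent Kraus operators `A_1,…,A_r`
(and canonical complementary channel `Ψ`) is mixed unitary with mixed-unitary rank
at most `N` iff some complementary channel `X ↦ VΨ(X)Vᴴ` (for an isometry
`V ∈ M_{N,r}`) admits an orthogonal basis of trace vectors for its image of
traceless matrices. -/
theorem stmt_2 (n r N : ℕ) (hn : 0 < n) (hr : 0 < r) (hN : r ≤ N)
    (A : Fin r → Matrix (Fin n) (Fin n) ℂ)
    (hli : LinearIndependent ℂ A)
    (hsum : ∑ k, (A k)ᴴ * A k = 1)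
    (Φ : Matrix (Fin n) (Fin n) ℂ → Matrix (Fin n) (Fin n) ℂ)
    (hΦ : ∀ X, Φ X = ∑ k, A k * X * (A k)ᴴ)
    (Ψ : Matrix (Fin n) (Fin n) ℂ → Matrix (Fin r) (Fin r) ℂ)
    (hΨ : ∀ X j k, Ψ X j k = Matrix.trace (A j * X * (A k)ᴴ)) :
    (∃ (U : Fin N → Matrix (Fin n) (Fin n) ℂ) (p : Fin N → ℝ),
        (∀ i, (U i)ᴴ * U i = 1 ∧ U i * (U i)ᴴ = 1) ∧
        (∀ i, 0 ≤ p i) ∧ (∑ i, p i = 1) ∧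
        (∀ X, Φ X = ∑ i, (p i : ℂ) • (U i * X * (U i)ᴴ))) ↔
    (∃ (V : Matrix (Fin N) (Fin r) ℂ) (v : Fin N → (Fin N → ℂ)),
        Vᴴ * V = 1 ∧
        (∀ i, v i ≠ 0) ∧
        (∀ i j, i ≠ j → star (v i) ⬝ᵥ v j = 0) ∧
        (∀ (i : Fin N) (X : Matrix (Fin n) (Fin n) ℂ), Matrix.trace X = 0 →
          star (v i) ⬝ᵥ ((V * Ψ X * Vᴴ) *ᵥ v i) = 0)) := by
  obtain rfl : Φ = krausMap A := funext hΦ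
  obtain rfl : Ψ = complementaryMap A := funext fun X => Matrix.ext (hΨ X)
  have : Nonempty (Fin n) := Fin.pos_iff_nonempty.1 hn
  exact stmt_2_general (by simpa using hN) A hsum
end

section
/- Let G be a finite group, let d be a positive integer, and let ρ : G → U(d) be a group homomorphism into the group of d×d complex unitary matrices. Let N be the complex dimension of the linear span of the set of matrices {ρ(g) : g ∈ G} in M_d(ℂ). Then there exist unitary matrices U_1, …, U_N ∈ M_d(ℂ) and nonnegative reals p_1, …, p_N with Σ_k p_k = 1 such that (1/|G|) Σ_{g ∈ G} ρ(g) X ρ(g)ᴴ = Σ_{k=1}^{N} p_k U_k X U_kᴴ for every X ∈ M_d(ℂ). -/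
open Matrix BigOperators

/-!
By Maschke and Wedderburn the span `A` of the representation is `∏ i, M_{n i}(ℂ)` with
`∑ i, n i ^ 2 = N`, and averaging an inner product over the group makes the isomorphism
star-preserving. If unitaries `u₁, …, u_N` form an orthonormal basis
of `A` for the inner product `τ (star x * y)` of a tracial state `τ`, then `∑ k, u k ⊗ star (u k)`
is the Casimir element of `τ`, so `Ψ Z = ∑ k, u k * Z * star (u k)` satisfies `Ψ (x Z) = Ψ (Z x)`
for `x ∈ A`. Hence `Ψ (ρ g * X * star (ρ g)) = Ψ X` for all `g`, while `Ψ` multiplies the twirl of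
`X`, which commutes with `A`, by `N`; so `Ψ` is `N` times the twirl.

To find such unitaries, let `τ` be the normalized trace of the regular representation, and take a
unitary with all entries of equal modulus in each block. Split an enumeration of the matrix units by
`ℤ/N` as `(i, a, b) ↦ α i a + β i b`. For each character `χ` of `ℤ/N`, multiplying the `(i, a, b)`
entry by `χ (α i a + β i b)` amounts to multiplying by diagonal unitaries on both sides, so it
preserves unitarity, and orthogonality of characters makes the `N` unitaries obtained orthonormal.
-/

section Unitarization

theorem exists_units_star_conj_eq {G C : Type*} [Group G] [Finite G] [CStarAlgebra C]
    (r : G →* C) : ∃ S : Cˣ, ∀ g, star (S * r g * ↑S⁻¹) = S * r g⁻¹ * ↑S⁻¹ := by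
  classical
  have := Fintype.ofFinite G
  let _ := CStarAlgebra.spectralOrder C
  have := CStarAlgebra.spectralOrderedRing C
  set P : C := ∑ g, star (r g) * r g with hP
  have hP_pos : IsStrictlyPositive P := by
    rw [hP, ← Finset.add_sum_erase _ _ (Finset.mem_univ (1 : G)), map_one, star_one, one_mul]
    exact isStrictlyPositive_one.add_nonneg (Finset.sum_nonneg fun g _ => star_mul_self_nonneg _)
  have hP_inv (g : G) : star (r g) * P * r g = P := by
    simp only [hP, Finset.mul_sum, Finset.sum_mul]
    rw [← Equiv.sum_comp (Equiv.mulRight g) fun h => star (r h) * r h]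
    simp [mul_assoc]
  have hP_comm (g : G) : star (r g) * P = P * r g⁻¹ := by
    calc star (r g) * P = star (r g) * P * r g * r g⁻¹ := by simp [mul_assoc, ← map_mul]
      _ = P * r g⁻¹ := by rw [hP_inv]
  obtain ⟨_, ⟨S, rfl⟩, hPS⟩ := CStarAlgebra.isStrictlyPositive_iff_eq_star_mul_self.mp hP_pos
  refine ⟨S, fun g => ?_⟩
  calc star (S * r g * ↑S⁻¹) = star (↑S⁻¹ : C) * (star (r g) * (star (S : C) * S)) * ↑S⁻¹ := by
        simp [mul_assoc]
    _ = star ((S : C) * ↑S⁻¹) * S * r g⁻¹ * ↑S⁻¹ := by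
        rw [← hPS, hP_comm, hPS, star_mul]; simp only [mul_assoc]
    _ = S * r g⁻¹ * ↑S⁻¹ := by simp

open scoped Matrix.Norms.L2Operator in
theorem exists_starAlgEquiv_pi_matrix_of_span_range_eq_top {G A : Type*} [Group G] [Finite G]
    [Ring A] [StarRing A] [Algebra ℂ A] [StarModule ℂ A] (r : G →* A)
    (hr_star : ∀ g, star (r g) = r g⁻¹) (hr_span : Submodule.span ℂ (Set.range r) = ⊤) :
    ∃ (m : ℕ) (n : Fin m → ℕ), (∀ i, NeZero (n i)) ∧
      Nonempty (A ≃⋆ₐ[ℂ] ∀ i, Matrix (Fin (n i)) (Fin (n i)) ℂ) := by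
  let L : MonoidAlgebra ℂ G →ₐ[ℂ] A := MonoidAlgebra.lift ℂ A G r
  have hL : Function.Surjective L := by
    rw [← AlgHom.coe_toLinearMap, ← LinearMap.range_eq_top, eq_top_iff, ← hr_span,
      Submodule.span_le]
    rintro _ ⟨g, rfl⟩
    exact ⟨MonoidAlgebra.of ℂ G g, MonoidAlgebra.lift_of ..⟩
  have : NeZero (Nat.card G : ℂ) := ⟨Nat.cast_ne_zero.mpr Nat.card_pos.ne'⟩
  have : IsSemisimpleRing A := RingHom.isSemisimpleRing_of_surjective L.toRingHom hL
  have : FiniteDimensional ℂ A := Module.Finite.of_surjective L.toLinearMap hL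
  obtain ⟨m, n, hn, ⟨e⟩⟩ := IsSemisimpleRing.exists_algEquiv_pi_matrix_of_isAlgClosed ℂ A
  obtain ⟨S, hS⟩ := exists_units_star_conj_eq
    ((e : A →* ∀ i, Matrix (Fin (n i)) (Fin (n i)) ℂ).comp r)
  let ψ := e.trans (MulSemiringAction.toAlgEquiv ℂ (∀ i, Matrix (Fin (n i)) (Fin (n i)) ℂ)
    (ConjAct.toConjAct S))
  refine ⟨m, n, hn, ⟨.ofAlgEquiv ψ fun x => ?_⟩⟩
  have hx : x ∈ Submodule.span ℂ (Set.range r) := hr_span ▸ Submodule.mem_top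
  induction hx using Submodule.span_induction with
  | mem x hx =>
    obtain ⟨g, rfl⟩ := hx
    rw [hr_star]
    exact (hS g).symm
  | zero => simp
  | add x y _ _ hx hy => simp [hx, hy]
  | smul a x _ hx => simp [hx]

end Unitarization

section DualBases

variable {R A B κ : Type*} [CommSemiring R] [Semiring A] [Algebra R A] [Semiring B] [Algebra R B]
  [Fintype κ]

theorem sum_map_mul_mul_map_comm_of_dual (φ : A →ₐ[R] B) (τ : A →ₗ[R] R)
    (hτ : ∀ x y, τ (x * y) = τ (y * x)) {u v : κ → A} (hu : ∀ x, ∑ k, τ (v k * x) • u k = x)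
    (hv : ∀ x, ∑ k, τ (x * u k) • v k = x) (x : A) (Z : B) :
    ∑ k, φ (u k) * (φ x * Z) * φ (v k) = ∑ k, φ (u k) * (Z * φ x) * φ (v k) := by
  calc ∑ k, φ (u k) * (φ x * Z) * φ (v k)
      = ∑ k, φ (∑ j, τ (v j * (u k * x)) • u j) * Z * φ (v k) := by
        simp only [hu, map_mul, mul_assoc]
    _ = ∑ k, ∑ j, τ (v j * (u k * x)) • (φ (u j) * Z * φ (v k)) := by
        simp only [map_sum, map_smul, Finset.sum_mul, smul_mul_assoc]
    _ = ∑ j, ∑ k, τ (x * v j * u k) • (φ (u j) * Z * φ (v k)) := by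
        rw [Finset.sum_comm]
        simp only [← mul_assoc, fun j k => hτ (v j * u k) x]
    _ = ∑ j, φ (u j) * Z * φ (∑ k, τ (x * v j * u k) • v k) := by
        simp only [map_sum, map_smul, Finset.mul_sum, mul_smul_comm]
    _ = ∑ k, φ (u k) * (Z * φ x) * φ (v k) := by
        simp only [hv, map_mul]
        simp only [mul_assoc]

theorem sum_smul_star_eq_of_sum_star_smul_eq [StarRing R] [StarRing A] [StarModule R A]
    {τ : A →ₗ[R] R} (hτ : ∀ x, τ (star x) = star (τ x)) {u : κ → A}
    (hu : ∀ x, ∑ k, τ (star (u k) * x) • u k = x) (x : A) :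
    ∑ k, τ (x * u k) • star (u k) = x := by
  simpa [← hτ] using congrArg star (hu (star x))

end DualBases

section Twirl

variable {R G B κ : Type*} [CommSemiring R] [Group G] [Fintype G] [Semiring B] [Algebra R B]
  [Fintype κ]

theorem commute_sum_conj_of_mem_span_range (r : G →* B) (X : B) {y : B}
    (hy : y ∈ Submodule.span R (Set.range r)) : Commute y (∑ g, r g * X * r g⁻¹) := by
  induction hy using Submodule.span_induction with
  | mem y hy =>
    obtain ⟨h, rfl⟩ := hy
    rw [Commute, SemiconjBy, Finset.mul_sum, Finset.sum_mul,
      ← Equiv.sum_comp (Equiv.mulLeft h) fun g => r g * X * r g⁻¹ * r h]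
    refine Finset.sum_congr rfl fun g _ => ?_
    rw [Equiv.coe_mulLeft, mul_assoc _ (r _) (r h), ← map_mul, _root_.mul_inv_rev,
      inv_mul_cancel_right, map_mul]
    simp only [mul_assoc]
  | zero => exact Commute.zero_left _
  | add y z _ _ hy hz => exact hy.add_left hz
  | smul a y _ hy => exact hy.smul_left a

theorem card_nsmul_sum_conj_eq (r : G →* B) {U V : κ → B} (hUV : ∀ k, U k * V k = 1)
    (hU : ∀ k, U k ∈ Submodule.span R (Set.range r))
    (hcomm : ∀ g Z, ∑ k, U k * (r g * Z) * V k = ∑ k, U k * (Z * r g) * V k) (X : B) :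
    Fintype.card κ • ∑ g, r g * X * r g⁻¹ = Fintype.card G • ∑ k, U k * X * V k := by
  calc Fintype.card κ • ∑ g, r g * X * r g⁻¹
      = ∑ k, U k * (∑ g, r g * X * r g⁻¹) * V k := by
        simp [fun k => (commute_sum_conj_of_mem_span_range r X (hU k)).eq, mul_assoc _ (U _), hUV]
    _ = ∑ g, ∑ k, U k * (r g * (X * r g⁻¹)) * V k := by
        rw [Finset.sum_comm]
        simp only [Finset.mul_sum, Finset.sum_mul, mul_assoc]
    _ = ∑ _g : G, ∑ k, U k * X * V k := by
        simp only [hcomm, mul_assoc X, ← map_mul, inv_mul_cancel, map_one, mul_one]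
    _ = Fintype.card G • ∑ k, U k * X * V k := by simp

end Twirl

section RegularTrace

variable {ι : Type*} {n : ι → Type*} [Fintype ι] [∀ i, Fintype (n i)]

variable (n) in
/-- The normalized trace of the left regular representation of `∏ i, M_{n i}(ℂ)`: left
multiplication by `x` has trace `∑ i, card (n i) * trace (x i)`, which is divided by the dimension
`card (Σ i, n i × n i)` of the algebra. -/
noncomputable def regularTrace : (∀ i, Matrix (n i) (n i) ℂ) →ₗ[ℂ] ℂ :=
  ∑ i, (Fintype.card (n i) / Fintype.card (Σ i, n i × n i) : ℂ) •
    (traceLinearMap (n i) ℂ ℂ ∘ₗ LinearMap.proj i)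

theorem regularTrace_apply (x : ∀ i, Matrix (n i) (n i) ℂ) : regularTrace n x =
    ∑ i, (Fintype.card (n i) / Fintype.card (Σ i, n i × n i) : ℂ) * (x i).trace := by
  simp [regularTrace]

theorem regularTrace_mul_comm (x y : ∀ i, Matrix (n i) (n i) ℂ) :
    regularTrace n (x * y) = regularTrace n (y * x) := by
  simp only [regularTrace_apply, Pi.mul_apply, trace_mul_comm (x _)]

theorem regularTrace_star (x : ∀ i, Matrix (n i) (n i) ℂ) :
    regularTrace n (star x) = star (regularTrace n x) := by
  simp [regularTrace_apply, star_eq_conjTranspose]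

theorem regularTrace_star_mul (x y : ∀ i, Matrix (n i) (n i) ℂ) :
    regularTrace n (star x * y) = ∑ s : Σ i, n i × n i,
      (Fintype.card (n s.1) / Fintype.card (Σ i, n i × n i) : ℂ) *
        (star (x s.1 s.2.1 s.2.2) * y s.1 s.2.1 s.2.2) := by
  simp only [regularTrace_apply, Fintype.sum_sigma, Fintype.sum_prod_type_right, trace,
    diag_apply, Pi.mul_apply, Pi.star_apply, mul_apply, star_apply, Finset.mul_sum]

theorem sum_regularTrace_smul_eq_of_orthogonal [DecidableEq (Σ i, n i × n i)] {κ : Type*}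
    [Fintype κ] {u : κ → ∀ i, Matrix (n i) (n i) ℂ}
    (hu : ∀ s t : Σ i, n i × n i, ∑ k, u k s.1 s.2.1 s.2.2 * star (u k t.1 t.2.1 t.2.2) =
      if s = t then (Fintype.card (Σ i, n i × n i) / Fintype.card (n s.1) : ℂ) else 0)
    (x : ∀ i, Matrix (n i) (n i) ℂ) : ∑ k, regularTrace n (star (u k) * x) • u k = x := by
  funext i
  ext a b
  have : Nonempty (n i) := ⟨a⟩
  have : Nonempty (Σ i, n i × n i) := ⟨⟨i, a, b⟩⟩
  calc (∑ k, regularTrace n (star (u k) * x) • u k) i a b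
      = ∑ t : Σ i, n i × n i, (Fintype.card (n t.1) / Fintype.card (Σ i, n i × n i) : ℂ) *
          x t.1 t.2.1 t.2.2 * ∑ k, u k i a b * star (u k t.1 t.2.1 t.2.2) := by
        simp only [regularTrace_star_mul, Finset.sum_apply, Matrix.sum_apply, Pi.smul_apply,
          Matrix.smul_apply, smul_eq_mul, Finset.sum_mul, Finset.mul_sum]
        rw [Finset.sum_comm]
        exact Finset.sum_congr rfl fun t _ => Finset.sum_congr rfl fun k _ => by ring
    _ = x i a b := by
        simp only [hu ⟨i, a, b⟩, mul_ite, mul_zero, Finset.sum_ite_eq, Finset.mem_univ, if_true]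
        have : (Fintype.card (n i) : ℂ) ≠ 0 := Nat.cast_ne_zero.mpr Fintype.card_ne_zero
        have : (Fintype.card (Σ i, n i × n i) : ℂ) ≠ 0 := Nat.cast_ne_zero.mpr Fintype.card_ne_zero
        field_simp

end RegularTrace

section FlatUnitary

theorem addChar_apply_mul_star_apply {H : Type*} [AddCommGroup H] [Finite H] (χ : AddChar H ℂ)
    (a b : H) : χ a * star (χ b) = χ (a - b) := by
  rw [sub_eq_add_neg, AddChar.map_add_eq_mul, AddChar.map_neg_eq_conj]
  rfl

theorem addChar_apply_mem_unitary {H : Type*} [AddCommGroup H] [Finite H] (χ : AddChar H ℂ)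
    (a : H) : χ a ∈ unitary ℂ := by
  rw [Unitary.mem_iff_self_mul_star, addChar_apply_mul_star_apply, sub_self,
    AddChar.map_zero_eq_one]

theorem exists_isHadamard (n : Type*) [Fintype n] [DecidableEq n] [Nonempty n] :
    ∃ F : Matrix n n ℂ, F.IsHadamard := by
  let e : n ≃ Fin (Fintype.card n) := Fintype.equivFin n
  have : NeZero (Fintype.card n) := ⟨Fintype.card_ne_zero⟩
  let c : n ≃ AddChar (Fin (Fintype.card n)) ℂ := Fintype.equivOfCardEq (by simp)
  refine ⟨of fun a b => c b (e a), .of_mul_conjTranspose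
    (fun a b => addChar_apply_mem_unitary _ _) ?_ ?_⟩
  · ext a b
    simp only [mul_apply, conjTranspose_apply, of_apply, addChar_apply_mul_star_apply]
    rw [c.sum_comp fun χ => χ (e a - e b), AddChar.sum_apply_eq_ite]
    simp [one_apply, sub_eq_zero]
  · exact IsRegular.of_ne_zero (Nat.cast_ne_zero.mpr Fintype.card_ne_zero)

theorem diagonal_mem_unitaryGroup {n R : Type*} [Fintype n] [DecidableEq n] [CommRing R]
    [StarRing R] {c : n → R} (hc : ∀ i, c i ∈ unitary R) : diagonal c ∈ unitaryGroup n R := by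
  have hc_mul (i : n) : c i * star (c i) = 1 := Unitary.mul_star_self_of_mem (hc i)
  simp [mem_unitaryGroup_iff, star_eq_conjTranspose, diagonal_conjTranspose,
    diagonal_mul_diagonal, hc_mul]

theorem exists_unitary_apply_mul_star_eq_inv_card (n : Type*) [Fintype n] [DecidableEq n]
    [Nonempty n] :
    ∃ W ∈ unitaryGroup n ℂ, ∀ a b, W a b * star (W a b) = (Fintype.card n : ℂ)⁻¹ := by
  obtain ⟨F, hF⟩ := exists_isHadamard n
  have hn : (Fintype.card n : ℂ) ≠ 0 := Nat.cast_ne_zero.mpr Fintype.card_ne_zero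
  let c : ℂ := ((√(Fintype.card n))⁻¹ : ℝ)
  have hc : c * star c = (Fintype.card n : ℂ)⁻¹ := by
    rw [Complex.star_def, Complex.conj_ofReal, ← Complex.ofReal_mul, ← mul_inv,
      Real.mul_self_sqrt (Nat.cast_nonneg _)]
    simp
  refine ⟨c • F, ?_, fun a b => ?_⟩
  · rw [mem_unitaryGroup_iff, star_smul, star_eq_conjTranspose, smul_mul_smul_comm, hc,
      hF.mul_conjTranspose, inv_smul_smul₀ hn]
  · rw [Matrix.smul_apply, smul_eq_mul, star_mul', mul_mul_mul_comm, hc,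
      Unitary.mul_star_self_of_mem (hF.apply_mem a b), mul_one]

end FlatUnitary

section PhaseModulation

variable {ι H : Type*} {n : ι → Type*} [∀ i, Fintype (n i)] [∀ i, DecidableEq (n i)]
  [AddCommGroup H]

/-- The tuple of matrices `W` with its `(i, a, b)` entry multiplied by the phase
`χ (α i a + β i b)`, for a character `χ`. It is written as a product with diagonal matrices to make
it visibly unitary when `W` is. -/
def phaseModulation (W : ∀ i, Matrix (n i) (n i) ℂ) (α β : ∀ i, n i → H) (χ : AddChar H ℂ) :
    ∀ i, Matrix (n i) (n i) ℂ :=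
  fun i => diagonal (χ ∘ α i) * W i * diagonal (χ ∘ β i)

theorem phaseModulation_apply (W : ∀ i, Matrix (n i) (n i) ℂ) (α β : ∀ i, n i → H)
    (χ : AddChar H ℂ) (i : ι) (a b : n i) :
    phaseModulation W α β χ i a b = W i a b * χ (α i a + β i b) := by
  simp only [phaseModulation, mul_diagonal, diagonal_mul, Function.comp_apply,
    AddChar.map_add_eq_mul]
  ring

theorem phaseModulation_mem_unitary [Finite H] {W : ∀ i, Matrix (n i) (n i) ℂ}
    (hW : ∀ i, W i ∈ unitaryGroup (n i) ℂ) (α β : ∀ i, n i → H) (χ : AddChar H ℂ) :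
    phaseModulation W α β χ ∈ unitary (∀ i, Matrix (n i) (n i) ℂ) := by
  have hχ {i : ι} (γ : n i → H) : diagonal (χ ∘ γ) ∈ unitaryGroup (n i) ℂ :=
    diagonal_mem_unitaryGroup fun _ => addChar_apply_mem_unitary χ _
  have h (i : ι) : phaseModulation W α β χ i ∈ unitaryGroup (n i) ℂ :=
    mul_mem (mul_mem (hχ _) (hW i)) (hχ _)
  exact ⟨funext fun i => (h i).1, funext fun i => (h i).2⟩

theorem sum_phaseModulation_apply_mul_star [Fintype H] [DecidableEq (Σ i, n i × n i)]
    {W : ∀ i, Matrix (n i) (n i) ℂ}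
    (hW : ∀ i a b, W i a b * star (W i a b) = (Fintype.card (n i) : ℂ)⁻¹)
    {f : (Σ i, n i × n i) → H} (hf_inj : Function.Injective f) {α β : ∀ i, n i → H}
    (hf : ∀ i a b, f ⟨i, a, b⟩ = α i a + β i b)
    (s t : Σ i, n i × n i) :
    ∑ χ : AddChar H ℂ, phaseModulation W α β χ s.1 s.2.1 s.2.2 *
        star (phaseModulation W α β χ t.1 t.2.1 t.2.2) =
      if s = t then (Fintype.card H / Fintype.card (n s.1) : ℂ) else 0 := by
  classical
  calc _ = W s.1 s.2.1 s.2.2 * star (W t.1 t.2.1 t.2.2) * ∑ χ : AddChar H ℂ, χ (f s - f t) := by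
        simp only [phaseModulation_apply, ← hf, star_mul', mul_mul_mul_comm (W _ _ _),
          addChar_apply_mul_star_apply, Finset.mul_sum]
    _ = _ := by
        rw [AddChar.sum_apply_eq_ite]
        simp only [sub_eq_zero, hf_inj.eq_iff]
        split_ifs with h
        · rw [h, hW, inv_mul_eq_div]
        · rw [mul_zero]

end PhaseModulation

theorem finSigmaFinEquiv_finProdFinEquiv_val {m : ℕ} (p q : Fin m → ℕ) (i : Fin m)
    (a : Fin (p i)) (b : Fin (q i)) :
    (finSigmaFinEquiv (n := fun i => p i * q i) ⟨i, finProdFinEquiv (a, b)⟩ : ℕ) =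
      (∑ j : Fin i, p (j.castLE i.2.le) * q (j.castLE i.2.le) + q i * a) + b := by
  rw [finSigmaFinEquiv_apply]
  simp [finProdFinEquiv, add_comm (b : ℕ), add_assoc]

theorem exists_equiv_fin_apply_eq_add {m : ℕ} (p q : Fin m → ℕ) {N : ℕ} [NeZero N]
    (hN : ∑ i, p i * q i = N) :
    ∃ (f : (Σ i, Fin (p i) × Fin (q i)) ≃ Fin N) (α : ∀ i, Fin (p i) → Fin N)
      (β : ∀ i, Fin (q i) → Fin N), ∀ i a b, f ⟨i, a, b⟩ = α i a + β i b := by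
  subst hN
  refine ⟨(Equiv.sigmaCongrRight fun i => finProdFinEquiv).trans finSigmaFinEquiv,
    fun i a => Fin.ofNat _ (∑ j : Fin i, p (j.castLE i.2.le) * q (j.castLE i.2.le) + q i * a),
    fun i b => Fin.ofNat _ b, fun i a b => ?_⟩
  have h := finSigmaFinEquiv_finProdFinEquiv_val p q i a b
  ext
  rw [Fin.val_add, Fin.val_ofNat, Fin.val_ofNat, ← Nat.add_mod, ← h,
    Nat.mod_eq_of_lt (Fin.is_lt _)]
  rfl

theorem exists_unitary_sum_regularTrace_smul_eq {m : ℕ} (n : Fin m → ℕ) [∀ i, NeZero (n i)]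
    {N : ℕ} [NeZero N] (hN : ∑ i, n i * n i = N) :
    ∃ u : Fin N → ∀ i, Matrix (Fin (n i)) (Fin (n i)) ℂ, (∀ k, u k ∈ unitary _) ∧
      ∀ x, ∑ k, regularTrace (fun i => Fin (n i)) (star (u k) * x) • u k = x := by
  choose W hW hW_flat using fun i => exists_unitary_apply_mul_star_eq_inv_card (Fin (n i))
  obtain ⟨f, α, β, hf⟩ := exists_equiv_fin_apply_eq_add n n hN
  let c : Fin N ≃ AddChar (Fin N) ℂ := Fintype.equivOfCardEq (by simp)
  refine ⟨phaseModulation W α β ∘ c, fun k => phaseModulation_mem_unitary hW α β (c k),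
    sum_regularTrace_smul_eq_of_orthogonal fun s t => ?_⟩
  rw [Fintype.card_congr f, ← sum_phaseModulation_apply_mul_star hW_flat f.injective hf]
  exact c.sum_comp fun χ => phaseModulation W α β χ s.1 s.2.1 s.2.2 *
    star (phaseModulation W α β χ t.1 t.2.1 t.2.2)

theorem finrank_span_range_pos {K M A : Type*} [Field K] [Monoid M] [Finite M] [Ring A]
    [Nontrivial A] [Algebra K A] (r : M →* A) :
    0 < Module.finrank K (Submodule.span K (Set.range r)) := by
  have : FiniteDimensional K (Submodule.span K (Set.range r)) :=
    .span_of_finite K (Set.finite_range r)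
  exact Module.finrank_pos_iff_exists_ne_zero.mpr
    ⟨⟨r 1, Submodule.subset_span ⟨1, rfl⟩⟩, by simp [Subtype.ext_iff]⟩

theorem toSubmodule_starAlgebraAdjoin_range {R G A : Type*} [CommSemiring R] [StarRing R]
    [Group G] [Semiring A] [StarRing A] [Algebra R A] [StarModule R A] (r : G →* A)
    (hr : ∀ g, star (r g) = r g⁻¹) :
    Subalgebra.toSubmodule (StarAlgebra.adjoin R (Set.range r)).toSubalgebra =
      Submodule.span R (Set.range r) := by
  have hstar : star (Set.range r) ⊆ Set.range r := by
    rintro x ⟨g, hg⟩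
    exact ⟨g⁻¹, by rw [← hr, hg, star_star]⟩
  rw [StarAlgebra.adjoin_toSubalgebra, Set.union_eq_self_of_subset_right hstar,
    Algebra.adjoin_eq_span, MonoidHom.mclosure_range, MonoidHom.coe_mrange]

section StarRepresentation

variable {G A : Type*} [Group G] [Ring A] [StarRing A] [Algebra ℂ A] [StarModule ℂ A]

theorem exists_starAlgHom_pi_matrix_injective_range_eq_span [Finite G] (r : G →* A)
    (hr : ∀ g, star (r g) = r g⁻¹) :
    ∃ (m : ℕ) (n : Fin m → ℕ) (φ : (∀ i, Matrix (Fin (n i)) (Fin (n i)) ℂ) →⋆ₐ[ℂ] A),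
      (∀ i, NeZero (n i)) ∧ Function.Injective φ ∧
      LinearMap.range φ.toAlgHom.toLinearMap = Submodule.span ℂ (Set.range r) := by
  let S := StarAlgebra.adjoin ℂ (Set.range r)
  have hS : Subalgebra.toSubmodule S.toSubalgebra = Submodule.span ℂ (Set.range r) :=
    toSubmodule_starAlgebraAdjoin_range r hr
  let r' : G →* S := r.codRestrict S fun g => StarAlgebra.subset_adjoin ℂ _ ⟨g, rfl⟩
  have hr' : Submodule.span ℂ (Set.range r') = ⊤ := by
    refine Submodule.map_injective_of_injective (f := S.subtype.toAlgHom.toLinearMap)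
      Subtype.val_injective ?_
    rw [Submodule.map_span, ← Set.range_comp, Submodule.map_top]
    exact hS.symm.trans (Submodule.range_subtype _).symm
  obtain ⟨m, n, hn, ⟨e⟩⟩ := exists_starAlgEquiv_pi_matrix_of_span_range_eq_top r'
    (fun g => Subtype.ext (hr g)) hr'
  refine ⟨m, n, S.subtype.comp e.symm, hn, Subtype.val_injective.comp e.symm.injective, ?_⟩
  rw [← hS]
  ext x
  constructor
  · rintro ⟨y, rfl⟩
    exact (e.symm y).2
  · exact fun hx => ⟨e ⟨x, hx⟩, congrArg Subtype.val (e.symm_apply_apply _)⟩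

theorem exists_unitary_card_nsmul_sum_conj_eq [Fintype G] (r : G →* A)
    (hr : ∀ g, star (r g) = r g⁻¹) {N : ℕ} [NeZero N]
    (hN : Module.finrank ℂ (Submodule.span ℂ (Set.range r)) = N) :
    ∃ U : Fin N → A, (∀ k, U k ∈ unitary A) ∧ ∀ X,
      N • ∑ g, r g * X * r g⁻¹ = Fintype.card G • ∑ k, U k * X * star (U k) := by
  obtain ⟨m, n, φ, hn, hφ, hφ_range⟩ := exists_starAlgHom_pi_matrix_injective_range_eq_span r hr
  have hN_sum : ∑ i, n i * n i = N := by
    rw [← hN, ← hφ_range, LinearMap.finrank_range_of_inj hφ, Module.finrank_pi_fintype]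
    simp [Module.finrank_matrix]
  obtain ⟨u, hu, hu_frame⟩ := exists_unitary_sum_regularTrace_smul_eq n hN_sum
  have hU (k : Fin N) : φ (u k) ∈ unitary A := Unitary.map_mem φ (hu k)
  have hU_span (k : Fin N) : φ (u k) ∈ Submodule.span ℂ (Set.range r) := hφ_range ▸ ⟨u k, rfl⟩
  have hcomm (g : G) (Z : A) : ∑ k, φ (u k) * (r g * Z) * φ (star (u k)) =
      ∑ k, φ (u k) * (Z * r g) * φ (star (u k)) := by
    obtain ⟨x, hx⟩ : r g ∈ LinearMap.range φ.toAlgHom.toLinearMap :=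
      hφ_range ▸ Submodule.subset_span ⟨g, rfl⟩
    rw [← hx]
    exact sum_map_mul_mul_map_comm_of_dual φ.toAlgHom (regularTrace _) regularTrace_mul_comm
      hu_frame (sum_smul_star_eq_of_sum_star_smul_eq regularTrace_star hu_frame) x Z
  refine ⟨φ ∘ u, hU, fun X => ?_⟩
  simp only [map_star] at hcomm
  simpa using card_nsmul_sum_conj_eq r (fun k => Unitary.mul_star_self_of_mem (hU k)) hU_span
    hcomm X

end StarRepresentation

theorem stmt_4_general {G A : Type*} [Group G] [Fintype G] [Ring A] [Nontrivial A] [StarRing A]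
    [Algebra ℂ A] [StarModule ℂ A] (ρ : G →* unitary A) (N : ℕ)
    (hN : N = Module.finrank ℂ (Submodule.span ℂ (Set.range fun g => (ρ g : A)))) :
    ∃ (U : Fin N → A) (p : Fin N → ℝ), (∀ k, U k ∈ unitary A) ∧ (∀ k, 0 ≤ p k) ∧
      ∑ k, p k = 1 ∧ ∀ X, (1 / (Fintype.card G : ℂ)) • ∑ g, (ρ g : A) * X * star (ρ g : A) =
        ∑ k, (p k : ℂ) • (U k * X * star (U k)) := by
  let r : G →* A := (unitary A).subtype.comp ρ
  have hr (g : G) : star (r g) = r g⁻¹ := (congrArg Subtype.val (map_inv ρ g)).symm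
  have : NeZero N := ⟨hN.trans_ne (finrank_span_range_pos r).ne'⟩
  obtain ⟨U, hU, hU_twirl⟩ := exists_unitary_card_nsmul_sum_conj_eq r hr hN.symm
  refine ⟨U, fun _ => (N : ℝ)⁻¹, hU, fun _ => by positivity, by simp, fun X => ?_⟩
  have hN' : (N : ℂ) ≠ 0 := NeZero.ne _
  have hG : (Fintype.card G : ℂ) ≠ 0 := Nat.cast_ne_zero.mpr Fintype.card_ne_zero
  have h := hU_twirl X
  simp only [← hr, ← Nat.cast_smul_eq_nsmul ℂ] at h
  rw [← Finset.smul_sum, one_div, inv_smul_eq_iff₀ hG, smul_comm, Complex.ofReal_inv,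
    Complex.ofReal_natCast, eq_inv_smul_iff₀ hN']
  exact h

/-- The twirling channel of a unitary representation of a finite group
is mixed unitary with a decomposition into `N` unitary conjugations, where `N` is
the dimension of the linear span of the representation matrices (the von Neumann
algebra generated by the representation). -/
theorem stmt_4 (G : Type*) [Group G] [Fintype G] (d : ℕ) (hd : 0 < d)
    (ρ : G →* Matrix.unitaryGroup (Fin d) ℂ)
    (N : ℕ)
    (hN : N = Module.finrank ℂ
      ↥(Submodule.span ℂ (Set.range fun g : G => (ρ g : Matrix (Fin d) (Fin d) ℂ)))) :
    ∃ (U : Fin N → Matrix (Fin d) (Fin d) ℂ) (p : Fin N → ℝ),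
      (∀ k, (U k)ᴴ * U k = 1 ∧ U k * (U k)ᴴ = 1) ∧
      (∀ k, 0 ≤ p k) ∧ (∑ k, p k = 1) ∧
      (∀ X : Matrix (Fin d) (Fin d) ℂ,
        (1 / (Fintype.card G : ℂ)) •
            ∑ g : G, (ρ g : Matrix (Fin d) (Fin d) ℂ) * X * ((ρ g : Matrix (Fin d) (Fin d) ℂ))ᴴ =
          ∑ k, (p k : ℂ) • (U k * X * (U k)ᴴ)) := by
  have : Nonempty (Fin d) := ⟨⟨0, hd⟩⟩
  exact stmt_4_general ρ N hN
end

section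
/- Let n be a positive integer and set N = (n⁴ + n²)/2. Let U(n) denote the compact group of n×n complex unitary matrices with its Borel σ-algebra and normalized Haar probability measure μ. Then there exist unitary matrices W_1, …, W_N ∈ M_{n²}(ℂ) such that for every X ∈ M_{n²}(ℂ) and all indices i, j, ∫_{U(n)} ((U⊗U) X (U⊗U)ᴴ)(i,j) dμ(U) = [ (1/N) Σ_{k=1}^{N} W_k X W_kᴴ ](i,j). -/
open Matrix BigOperators MeasureTheory Kronecker

/-!
By invariance of the Haar measure the twirl of any matrix commutes with every `V ⊗ V`, and the
commutant of these matrices is spanned by `1` and the swap `S`. To get there, apply the hypothesis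
to `V = 1 + (z - 1) P` for projections `P`: this linearises `V ⊗ V` to `A ⊗ 1 + 1 ⊗ A` and then to
`A ⊗ B + B ⊗ A` for arbitrary `A` and `B`.

In an eigenbasis of `S`, with signs `ε i`, there are `(dim ^ 2 + (tr S) ^ 2) / 2 = N` pairs `(i, j)`
with `ε i = ε j`. Hence `(i, j) ↦ p i + q j` can be made injective on them with values in `ZMod N`.
Let `H` be block diagonal along `ε` with normalised Fourier matrices as blocks, and let `W k` be `H`
with the entry `(i, j)` multiplied by `ψ (k (p i + q j))` for a primitive additive character `ψ`. By
orthogonality of characters, `∑ k, W k X (W k)ᴴ` is diagonal and depends only on `tr X` and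
`tr (S X)`. Both are unchanged when `X` is replaced by `(U ⊗ U) X (U ⊗ U)ᴴ`, so the sum agrees on
`X` and on its twirl; since each `W k` commutes with `S`, it fixes the twirl.
-/

section KroneckerSum

variable {ι : Type*} [DecidableEq ι]

/-- The Kronecker sum `A ⊗ 1 + 1 ⊗ A`, as a linear map in `A`: the derivative of `V ↦ V ⊗ V`
at the identity, in the direction `A`. -/
def kroneckerSum : Matrix ι ι ℂ →ₗ[ℂ] Matrix (ι × ι) (ι × ι) ℂ where
  toFun A := A ⊗ₖ 1 + 1 ⊗ₖ A
  map_add' A B := by rw [add_kronecker, kronecker_add, add_add_add_comm]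
  map_smul' c A := by rw [smul_kronecker, kronecker_smul, ← smul_add, RingHom.id_apply]

theorem kroneckerSum_apply (A : Matrix ι ι ℂ) : kroneckerSum A = A ⊗ₖ 1 + 1 ⊗ₖ A := rfl

theorem kroneckerSum_mul_kroneckerSum [Fintype ι] (A B : Matrix ι ι ℂ) :
    kroneckerSum A * kroneckerSum B = kroneckerSum (A * B) + (A ⊗ₖ B + B ⊗ₖ A) := by
  simp only [kroneckerSum_apply, add_mul, mul_add, ← mul_kronecker_mul, Matrix.one_mul,
    Matrix.mul_one]
  abel

theorem one_add_smul_kronecker_self (z : ℂ) (A : Matrix ι ι ℂ) :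
    (1 + z • A) ⊗ₖ (1 + z • A) = 1 + z • kroneckerSum A + z ^ 2 • (A ⊗ₖ A) := by
  simp only [kroneckerSum_apply, add_kronecker, kronecker_add, smul_kronecker, kronecker_smul,
    one_kronecker_one]
  module

end KroneckerSum

section Commutant

variable {ι : Type*} [Fintype ι] [DecidableEq ι]

theorem one_add_smul_mem_unitaryGroup {P : Matrix ι ι ℂ} (hP : IsStarProjection P) {z : ℂ}
    (hz : z * star z = 1) : 1 + (z - 1) • P ∈ unitaryGroup ι ℂ := by
  have hPP : P * P = P := hP.isIdempotentElem
  rw [mem_unitaryGroup_iff, star_add, star_one, star_smul, hP.isSelfAdjoint.star_eq, add_mul,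
    mul_add, mul_add, smul_mul_smul_comm, hPP, star_sub, star_one, Matrix.one_mul,
    Matrix.one_mul, Matrix.mul_one]
  linear_combination (norm := module) hz • P

omit [DecidableEq ι] in
theorem isStarProjection_smul_vecMulVec_star {v : ι → ℂ} (hv : star v ⬝ᵥ v ≠ 0) :
    IsStarProjection ((star v ⬝ᵥ v)⁻¹ • vecMulVec v (star v)) where
  isIdempotentElem := by
    rw [IsIdempotentElem, smul_mul_smul_comm, vecMulVec_mul_vecMulVec, vecMulVec_smul, smul_smul,
      mul_assoc, inv_mul_cancel₀ hv, mul_one]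
  isSelfAdjoint := by
    rw [IsSelfAdjoint, star_smul, star_eq_conjTranspose, conjTranspose_vecMulVec, star_star,
      star_inv₀, ← star_dotProduct]

theorem vecMulVec_star_polarization {m : Type*} (u w : m → ℂ) :
    (4 : ℂ) • vecMulVec u (star w) =
      vecMulVec (u + w) (star (u + w)) - vecMulVec (u - w) (star (u - w)) +
      Complex.I • (vecMulVec (u + Complex.I • w) (star (u + Complex.I • w)) -
        vecMulVec (u - Complex.I • w) (star (u - Complex.I • w))) := by
  ext i j
  simp only [Matrix.smul_apply, vecMulVec_apply, Matrix.add_apply, Matrix.sub_apply,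
    Pi.star_apply, Pi.add_apply, Pi.sub_apply, Pi.smul_apply, star_add, star_sub, star_smul,
    smul_eq_mul, RCLike.star_def, Complex.conj_I]
  linear_combination (2 * u i * (starRingEnd ℂ) (w j) - 2 * w i * (starRingEnd ℂ) (u j)) *
    Complex.I_sq

theorem span_range_vecMulVec_star (m : Type*) [Finite m] :
    Submodule.span ℂ (Set.range fun v : m → ℂ => vecMulVec v (star v)) = ⊤ := by
  classical
  cases nonempty_fintype m
  set L := Submodule.span ℂ (Set.range fun v : m → ℂ => vecMulVec v (star v))
  have hself (v : m → ℂ) : vecMulVec v (star v) ∈ L := Submodule.subset_span ⟨v, rfl⟩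
  have hmem (u w : m → ℂ) : vecMulVec u (star w) ∈ L := by
    rw [← L.smul_mem_iff (by norm_num : (4 : ℂ) ≠ 0), vecMulVec_star_polarization]
    exact L.add_mem (L.sub_mem (hself _) (hself _))
      (L.smul_mem _ (L.sub_mem (hself _) (hself _)))
  refine Submodule.eq_top_iff'.2 fun A => ?_
  rw [matrix_eq_sum_single A]
  refine L.sum_mem fun i _ => L.sum_mem fun j _ => ?_
  have hsingle : single i j (A i j) = vecMulVec (A i j • Pi.single i 1) (star (Pi.single j 1)) := by
    rw [Pi.star_single, star_one, smul_vecMulVec, ← single_eq_single_vecMulVec_single, smul_single,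
      smul_eq_mul, mul_one]
  exact hsingle ▸ hmem _ _

variable {M : Matrix (ι × ι) (ι × ι) ℂ}

-- Evaluating `V z ⊗ V z` for the unitaries `V z = 1 + (z - 1) P` at `z = -1` and `z = I` is
-- enough to eliminate the quadratic term `P ⊗ P`.
theorem commute_kroneckerSum_of_isStarProjection
    (hM : ∀ V ∈ unitaryGroup ι ℂ, Commute (V ⊗ₖ V) M) {P : Matrix ι ι ℂ}
    (hP : IsStarProjection P) : Commute (kroneckerSum P) M := by
  let V (z : ℂ) : Matrix ι ι ℂ := 1 + (z - 1) • P
  have hneg : Commute (V (-1) ⊗ₖ V (-1)) M := hM _ (one_add_smul_mem_unitaryGroup hP (by simp))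
  have hI : Commute (V Complex.I ⊗ₖ V Complex.I) M :=
    hM _ (one_add_smul_mem_unitaryGroup hP (by simp))
  have hcomb : kroneckerSum P = (1 + Complex.I / 2) • 1 -
      (Complex.I / 2) • (V (-1) ⊗ₖ V (-1)) - V Complex.I ⊗ₖ V Complex.I := by
    simp only [V, one_add_smul_kronecker_self]
    linear_combination (norm := module) Complex.I_sq • (P ⊗ₖ P)
  rw [hcomb]
  exact (((Commute.one_left M).smul_left _).sub_left (hneg.smul_left _)).sub_left hI

open scoped ComplexOrder in
theorem commute_kroneckerSum (hM : ∀ V ∈ unitaryGroup ι ℂ, Commute (V ⊗ₖ V) M)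
    (A : Matrix ι ι ℂ) : Commute (kroneckerSum A) M := by
  have hA : A ∈ Submodule.span ℂ (Set.range fun v : ι → ℂ => vecMulVec v (star v)) := by
    simp only [span_range_vecMulVec_star ι, Submodule.mem_top]
  induction hA using Submodule.span_induction with
  | mem A hA =>
    obtain ⟨v, rfl⟩ := hA
    rcases eq_or_ne v 0 with rfl | hv
    · simp
    have hvv : star v ⬝ᵥ v ≠ 0 := dotProduct_star_self_eq_zero.not.2 hv
    have hP := commute_kroneckerSum_of_isStarProjection hM
      (isStarProjection_smul_vecMulVec_star hvv)
    simpa only [← map_smul, smul_inv_smul₀ hvv] using hP.smul_left (star v ⬝ᵥ v)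
  | zero => simp
  | add A B _ _ hA hB => exact map_add kroneckerSum A B ▸ hA.add_left hB
  | smul c A _ hA => exact map_smul kroneckerSum c A ▸ hA.smul_left c

theorem commute_kronecker_add_kronecker (hM : ∀ V ∈ unitaryGroup ι ℂ, Commute (V ⊗ₖ V) M)
    (A B : Matrix ι ι ℂ) : Commute (A ⊗ₖ B + B ⊗ₖ A) M := by
  rw [← sub_eq_of_eq_add' (kroneckerSum_mul_kroneckerSum A B)]
  exact ((commute_kroneckerSum hM A).mul_left (commute_kroneckerSum hM B)).sub_left
    (commute_kroneckerSum hM (A * B))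

/-- The matrix exchanging the two tensor factors. -/
abbrev swapMatrix (ι : Type*) [DecidableEq ι] : Matrix (ι × ι) (ι × ι) ℂ :=
  Equiv.Perm.permMatrix ℂ (Equiv.prodComm ι ι)

theorem swapMatrix_apply {ι : Type*} [DecidableEq ι] (p q : ι × ι) :
    swapMatrix ι p q = if p.swap = q then 1 else 0 := by
  simp [swapMatrix, PEquiv.toMatrix_apply, eq_comm]

theorem single_mul_apply_eq_ite {m : Type*} (i j p : ι) (q : m) (c : ℂ) (A : Matrix ι m ℂ) :
    (single i j c * A) p q = if p = i then c * A j q else 0 := by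
  split_ifs with h
  · rw [h, single_mul_apply_same]
  · rw [single_mul_apply_of_ne _ _ _ _ _ h]

theorem exists_eq_smul_one_add_smul_swapMatrix
    (hM : ∀ V ∈ unitaryGroup ι ℂ, Commute (V ⊗ₖ V) M) :
    ∃ α β : ℂ, M = α • 1 + β • swapMatrix ι := by
  rcases subsingleton_or_nontrivial ι with hι | ⟨z, w, hzw⟩
  · refine ⟨trace M, 0, ?_⟩
    ext p q
    obtain rfl := Subsingleton.elim p q
    simp [trace, Fintype.sum_subsingleton _ p]
  refine ⟨M (z, w) (z, w), M (w, z) (z, w), ?_⟩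
  ext p q
  have hne : (z, w) ≠ (w, z) := fun h => hzw (congrArg Prod.fst h)
  have h := congr_fun₂
    (commute_kronecker_add_kronecker hM (single q.1 z 1) (single q.2 w 1)) p (z, w)
  simp only [single_kronecker_single, add_mul, mul_add, Matrix.add_apply, mul_single_apply_same,
    mul_single_apply_of_ne _ _ _ _ _ hne, single_mul_apply_eq_ite] at h
  simp only [Matrix.add_apply, Matrix.smul_apply, swapMatrix_apply, one_apply]
  have : p.swap = q ↔ p = (q.2, q.1) := Prod.swap_eq_iff_eq_swap
  simpa [this] using h.symm

end Commutant

section Phase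

variable {ι R : Type*} [Fintype ι] [DecidableEq ι] [CommRing R]

theorem diagonal_mem_unitaryGroup_s18 {v : ι → ℂ} (hv : ∀ i, ‖v i‖ = 1) :
    diagonal v ∈ unitaryGroup ι ℂ := by
  rw [mem_unitaryGroup_iff, star_eq_conjTranspose, diagonal_conjTranspose, diagonal_mul_diagonal,
    ← diagonal_one]
  congr 1 with i
  simp [RCLike.mul_conj, hv i]

/-- The unnormalised mixed-unitary channel `X ↦ ∑ k, W k * X * (W k)ᴴ`. -/
def mixedUnitary {τ : Type*} [Fintype τ] (W : τ → unitaryGroup ι ℂ) :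
    Matrix ι ι ℂ →ₗ[ℂ] Matrix ι ι ℂ where
  toFun X := ∑ k, (W k : Matrix ι ι ℂ) * X * (W k : Matrix ι ι ℂ)ᴴ
  map_add' X Y := by simp only [mul_add, add_mul, Finset.sum_add_distrib]
  map_smul' c X := by simp only [mul_smul_comm, smul_mul_assoc, Finset.smul_sum, RingHom.id_apply]

theorem mixedUnitary_apply {τ : Type*} [Fintype τ] (W : τ → unitaryGroup ι ℂ)
    (X : Matrix ι ι ℂ) :
    mixedUnitary W X = ∑ k, (W k : Matrix ι ι ℂ) * X * (W k : Matrix ι ι ℂ)ᴴ := rfl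

theorem mixedUnitary_eq_card_smul_of_commute {τ : Type*} [Fintype τ] {W : τ → unitaryGroup ι ℂ}
    {M : Matrix ι ι ℂ} (hM : ∀ k, Commute (W k : Matrix ι ι ℂ) M) :
    mixedUnitary W M = Fintype.card τ • M := by
  have hconj (k : τ) : (W k : Matrix ι ι ℂ) * M * (W k : Matrix ι ι ℂ)ᴴ = M := by
    have hunit : (W k : Matrix ι ι ℂ) * (W k : Matrix ι ι ℂ)ᴴ = 1 :=
      mem_unitaryGroup_iff.1 (W k).2
    rw [(hM k).eq, Matrix.mul_assoc, hunit, Matrix.mul_one]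
  simp only [mixedUnitary_apply, hconj, Finset.sum_const, Finset.card_univ]

/-- The family of unitaries obtained from `H` by multiplying the entry `(i, j)` by the phase
`ψ (k * (p i + q j))`. -/
def phaseTwist [Finite R] (ψ : AddChar R ℂ) (p q : ι → R) (H : unitaryGroup ι ℂ) (k : R) :
    unitaryGroup ι ℂ :=
  ⟨diagonal (fun i => ψ (k * p i)) * H * diagonal (fun j => ψ (k * q j)),
    mul_mem (mul_mem (diagonal_mem_unitaryGroup_s18 fun _ => ψ.norm_apply _) H.2)
      (diagonal_mem_unitaryGroup_s18 fun _ => ψ.norm_apply _)⟩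

theorem phaseTwist_apply [Finite R] (ψ : AddChar R ℂ) (p q : ι → R) (H : unitaryGroup ι ℂ)
    (k : R) (i j : ι) :
    (phaseTwist ψ p q H k : Matrix ι ι ℂ) i j = ψ (k * (p i + q j)) * (H : Matrix ι ι ℂ) i j := by
  change (diagonal (fun i => ψ (k * p i)) * (H : Matrix ι ι ℂ) *
    diagonal (fun j => ψ (k * q j))) i j = _
  rw [mul_diagonal, diagonal_mul, mul_add, AddChar.map_add_eq_mul]
  ring

theorem sum_mul_star_of_isPrimitive [Fintype R] [DecidableEq R] {ψ : AddChar R ℂ}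
    (hψ : ψ.IsPrimitive) (a b : R) :
    ∑ k, ψ (k * a) * star (ψ (k * b)) = if a = b then (Fintype.card R : ℂ) else 0 := by
  have hψ_sub (k : R) : ψ (k * a) * star (ψ (k * b)) = ψ (k * (a - b)) := by
    rw [mul_sub, sub_eq_add_neg, AddChar.map_add_eq_mul, AddChar.map_neg_eq_conj, RCLike.star_def]
  simp only [hψ_sub, AddChar.sum_mulShift _ hψ, sub_eq_zero, Nat.cast_ite, Nat.cast_zero]

theorem sum_phaseTwist_apply_mul_star [Fintype R] {ψ : AddChar R ℂ} (hψ : ψ.IsPrimitive)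
    {p q : ι → R} {H : unitaryGroup ι ℂ}
    (hinj : {x : ι × ι | (H : Matrix ι ι ℂ) x.1 x.2 ≠ 0}.InjOn fun x => p x.1 + q x.2)
    (X : Matrix ι ι ℂ) (i i' j j' : ι) :
    ∑ k, (phaseTwist ψ p q H k : Matrix ι ι ℂ) i j * X j j' *
        star ((phaseTwist ψ p q H k : Matrix ι ι ℂ) i' j') =
      if i = i' ∧ j = j' then
        (Fintype.card R : ℂ) * ((‖(H : Matrix ι ι ℂ) i j‖ : ℂ) ^ 2 * X j j) else 0 := by
  classical
  set h := (H : Matrix ι ι ℂ)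
  calc _ = (h i j * X j j' * star (h i' j')) *
        ∑ k, ψ (k * (p i + q j)) * star (ψ (k * (p i' + q j'))) := by
        rw [Finset.mul_sum]
        refine Finset.sum_congr rfl fun k _ => ?_
        simp only [phaseTwist_apply, star_mul', h]
        ring
    _ = _ := by
        rw [sum_mul_star_of_isPrimitive hψ]
        split_ifs with hpq hij hij
        · obtain ⟨rfl, rfl⟩ := hij
          have hnorm : h i j * star (h i j) = (‖h i j‖ : ℂ) ^ 2 := RCLike.mul_conj _
          linear_combination (Fintype.card R * X j j : ℂ) * hnorm
        · have : h i j = 0 ∨ h i' j' = 0 := by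
            by_contra! hne
            exact hij (Prod.mk.inj (@hinj (i, j) hne.1 (i', j') hne.2 hpq))
          rcases this with hzero | hzero <;> simp [hzero]
        · exact absurd (by rw [hij.1, hij.2]) hpq
        · rw [mul_zero]

theorem mixedUnitary_phaseTwist [Fintype R] {ψ : AddChar R ℂ} (hψ : ψ.IsPrimitive)
    {p q : ι → R} {H : unitaryGroup ι ℂ}
    (hinj : {x : ι × ι | (H : Matrix ι ι ℂ) x.1 x.2 ≠ 0}.InjOn fun x => p x.1 + q x.2)
    (X : Matrix ι ι ℂ) :
    mixedUnitary (phaseTwist ψ p q H) X =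
      diagonal fun i => (Fintype.card R : ℂ) *
        ∑ j, (‖(H : Matrix ι ι ℂ) i j‖ : ℂ) ^ 2 * X j j := by
  classical
  ext i i'
  calc mixedUnitary (phaseTwist ψ p q H) X i i'
      = ∑ j', ∑ j, ∑ k, (phaseTwist ψ p q H k : Matrix ι ι ℂ) i j * X j j' *
          star ((phaseTwist ψ p q H k : Matrix ι ι ℂ) i' j') := by
        simp only [mixedUnitary_apply, Matrix.sum_apply, mul_apply, conjTranspose_apply,
          Finset.sum_mul]
        rw [Finset.sum_comm]
        exact Finset.sum_congr rfl fun j' _ => Finset.sum_comm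
    _ = _ := by
        simp only [sum_phaseTwist_apply_mul_star hψ hinj, diagonal_apply]
        by_cases hii : i = i' <;> simp [hii, Finset.mul_sum]

end Phase

section Fourier

variable {R : Type*} [CommRing R] [Fintype R]

/-- The discrete Fourier matrix of a finite ring with respect to an additive character, with the
normalisation that makes it unitary when the character is primitive. -/
noncomputable def fourierMatrix (ψ : AddChar R ℂ) : Matrix R R ℂ :=
  of fun i j => ((√(Fintype.card R))⁻¹ : ℝ) * ψ (j * i)

theorem fourierMatrix_mem_unitaryGroup [DecidableEq R] {ψ : AddChar R ℂ} (hψ : ψ.IsPrimitive) :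
    fourierMatrix ψ ∈ unitaryGroup R ℂ := by
  have hcard : (((√(Fintype.card R))⁻¹ : ℝ) : ℂ) * ((√(Fintype.card R))⁻¹ : ℝ) *
      (Fintype.card R : ℂ) = 1 := by
    rw [← Complex.ofReal_mul, ← mul_inv, Real.mul_self_sqrt (Nat.cast_nonneg _),
      Complex.ofReal_inv, Complex.ofReal_natCast, inv_mul_cancel₀]
    exact_mod_cast Fintype.card_ne_zero
  rw [mem_unitaryGroup_iff]
  ext i j
  calc (fourierMatrix ψ * star (fourierMatrix ψ)) i j
      = (((√(Fintype.card R))⁻¹ : ℝ) : ℂ) * ((√(Fintype.card R))⁻¹ : ℝ) *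
          ∑ k, ψ (k * i) * star (ψ (k * j)) := by
        rw [mul_apply, Finset.mul_sum]
        refine Finset.sum_congr rfl fun k _ => ?_
        simp only [fourierMatrix, star_apply, of_apply, star_mul', RCLike.star_def,
          Complex.conj_ofReal]
        ring
    _ = (1 : Matrix R R ℂ) i j := by
        rw [sum_mul_star_of_isPrimitive hψ, one_apply, mul_ite, hcard, mul_zero]

theorem norm_fourierMatrix_apply_sq (ψ : AddChar R ℂ) (i j : R) :
    ‖fourierMatrix ψ i j‖ ^ 2 = (Fintype.card R : ℝ)⁻¹ := by
  simp [fourierMatrix]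

theorem submatrix_mem_unitaryGroup {m n : Type*} [Fintype m] [DecidableEq m] [Fintype n]
    [DecidableEq n] {U : Matrix n n ℂ} (hU : U ∈ unitaryGroup n ℂ) (e : m ≃ n) :
    U.submatrix e e ∈ unitaryGroup m ℂ := by
  rw [mem_unitaryGroup_iff, star_eq_conjTranspose] at hU ⊢
  rw [conjTranspose_submatrix, submatrix_mul_equiv, hU, submatrix_one_equiv]

theorem blockDiagonal'_mem_unitaryGroup {κ : Type*} [Fintype κ] [DecidableEq κ] {m : κ → Type*}
    [∀ k, Fintype (m k)] [∀ k, DecidableEq (m k)] {U : ∀ k, Matrix (m k) (m k) ℂ}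
    (hU : ∀ k, U k ∈ unitaryGroup (m k) ℂ) :
    blockDiagonal' U ∈ unitaryGroup (Σ k, m k) ℂ := by
  rw [mem_unitaryGroup_iff, star_eq_conjTranspose, blockDiagonal'_conjTranspose,
    ← blockDiagonal'_mul, ← blockDiagonal'_one]
  congr 1 with k : 1
  exact mem_unitaryGroup_iff.1 (hU k)

theorem exists_mem_unitaryGroup_norm_sq_eq_inv_card (α : Type*) [Fintype α] [DecidableEq α] :
    ∃ H ∈ unitaryGroup α ℂ, ∀ i j, ‖H i j‖ ^ 2 = (Fintype.card α : ℝ)⁻¹ := by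
  rcases isEmpty_or_nonempty α with hα | hα
  · exact ⟨1, one_mem _, isEmptyElim⟩
  let e : α ≃ ZMod (Fintype.card α) := Fintype.equivOfCardEq (ZMod.card _).symm
  refine ⟨(fourierMatrix ZMod.stdAddChar).submatrix e e, submatrix_mem_unitaryGroup
    (fourierMatrix_mem_unitaryGroup (ZMod.isPrimitive_stdAddChar _)) e, fun i j => ?_⟩
  rw [submatrix_apply, norm_fourierMatrix_apply_sq, ZMod.card]

variable {ι κ : Type*} [Fintype ι] [DecidableEq ι] [DecidableEq κ]

theorem exists_mem_unitaryGroup_norm_sq_eq_ite [Finite κ] (s : ι → κ) :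
    ∃ H ∈ unitaryGroup ι ℂ, ∀ i j,
      ‖H i j‖ ^ 2 = if s i = s j then (Fintype.card {x // s x = s i} : ℝ)⁻¹ else 0 := by
  cases nonempty_fintype κ
  choose F hF hFnorm using fun k =>
    exists_mem_unitaryGroup_norm_sq_eq_inv_card {x // s x = k}
  let e : ι ≃ Σ k, {x // s x = k} := (Equiv.sigmaFiberEquiv s).symm
  refine ⟨(blockDiagonal' F).submatrix e e,
    submatrix_mem_unitaryGroup (blockDiagonal'_mem_unitaryGroup hF) e, fun i j => ?_⟩
  have hei : e i = ⟨s i, i, rfl⟩ := rfl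
  have hej (h : s j = s i) : e j = ⟨s i, j, h⟩ := (Equiv.symm_apply_eq _).2 rfl
  rw [submatrix_apply, hei]
  split_ifs with h
  · rw [hej h.symm, blockDiagonal'_apply_eq, hFnorm]
  · have : blockDiagonal' F ⟨s i, i, rfl⟩ (e j) = 0 := blockDiagonal'_apply_ne _ _ _ h
    simp [this]

omit [DecidableEq ι] [DecidableEq κ] in
theorem exists_injOn_add_and_add_lt_sum (d : ι → ℕ) :
    ∃ p : ι → ℕ, {x : ι × ℕ | x.2 < d x.1}.InjOn (fun x => p x.1 + x.2) ∧
      ∀ i, ∀ r < d i, p i + r < ∑ i, d i := by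
  let e := Fintype.equivFin ι
  let f := finSigmaFinEquiv (n := d ∘ e.symm)
  let p (i : ι) : ℕ := ∑ a : Fin (e i), d (e.symm (Fin.castLE (e i).2.le a))
  have hf (i : ι) (r : Fin ((d ∘ e.symm) (e i))) : (f ⟨e i, r⟩ : ℕ) = p i + r :=
    finSigmaFinEquiv_apply _
  have hd (i : ι) : (d ∘ e.symm) (e i) = d i := congrArg d (e.symm_apply_apply i)
  refine ⟨p, ?_, fun i r hr => ?_⟩
  · rintro ⟨i, r⟩ hr ⟨i', r'⟩ hr' h
    have hfeq : f ⟨e i, r, (hd i).symm ▸ hr⟩ = f ⟨e i', r', (hd i').symm ▸ hr'⟩ :=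
      Fin.ext (by rw [hf, hf]; exact h)
    obtain ⟨hi, hr⟩ := Sigma.mk.inj (f.injective hfeq)
    obtain rfl := e.injective hi
    exact congrArg (i, ·) (congrArg Fin.val (eq_of_heq hr))
  · rw [← e.symm.sum_comp]
    exact hf i ⟨r, (hd i).symm ▸ hr⟩ ▸ (f _).isLt

omit [DecidableEq ι] in
theorem exists_injOn_add (s : ι → κ) {N : ℕ} (hN : Fintype.card {x : ι × ι // s x.1 = s x.2} = N) :
    ∃ p q : ι → ZMod N, {x : ι × ι | s x.1 = s x.2}.InjOn fun x => p x.1 + q x.2 := by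
  obtain ⟨p, hp_inj, hp_lt⟩ :=
    exists_injOn_add_and_add_lt_sum fun i => Fintype.card {j // s i = s j}
  have hN_sum : ∑ i, Fintype.card {j // s i = s j} = N := by
    rw [← hN, ← Fintype.card_sigma]
    exact Fintype.card_congr (Equiv.subtypeProdEquivSigmaSubtype fun i j => s i = s j).symm
  -- The intervals `[p i, p i + #{j // s i = s j})` are disjoint and `q` numbers the elements of
  -- each fibre of `s`, so `p i + q j` determines `i` and then `j`.
  let rank (c : κ) (j : {j // c = s j}) : ℕ := Fintype.equivFin {j // c = s j} j
  let q (j : ι) : ℕ := rank (s j) ⟨j, rfl⟩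
  have hq {c : κ} {j : ι} (h : c = s j) : q j = rank c ⟨j, h⟩ := by subst h; rfl
  have hq_lt (i j : ι) (h : s i = s j) : q j < Fintype.card {j // s i = s j} :=
    hq h ▸ (Fintype.equivFin {j // s i = s j} ⟨j, h⟩).isLt
  refine ⟨fun i => p i, fun j => q j, ?_⟩
  rintro ⟨i, j⟩ hij ⟨i', j'⟩ hij' h
  have hnat : p i + q j = p i' + q j' := by
    refine CharP.natCast_injOn_Iio (ZMod N) N ?_ ?_ (by simpa only [Nat.cast_add] using h)
    · exact hN_sum ▸ hp_lt i _ (hq_lt i j hij)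
    · exact hN_sum ▸ hp_lt i' _ (hq_lt i' j' hij')
  obtain ⟨rfl, hqq⟩ := Prod.mk.inj
    (@hp_inj (i, q j) (hq_lt i j hij) (i', q j') (hq_lt i' j' hij') hnat)
  rw [hq hij, hq hij'] at hqq
  have := (Fintype.equivFin _).injective (Fin.ext hqq)
  exact congrArg (i, ·) (congrArg Subtype.val this)

theorem exists_mixedUnitary_eq_diagonal [Finite κ] (s : ι → κ) {N : ℕ} [NeZero N]
    (hN : Fintype.card {x : ι × ι // s x.1 = s x.2} = N) :
    ∃ W : Fin N → unitaryGroup ι ℂ,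
      (∀ k i j, s i ≠ s j → (W k : Matrix ι ι ℂ) i j = 0) ∧
      ∀ X, mixedUnitary W X =
        diagonal fun i => (N : ℂ) * ((Fintype.card {x // s x = s i} : ℂ)⁻¹ *
          ∑ j, if s i = s j then X j j else 0) := by
  obtain ⟨H, hH, hHnorm⟩ := exists_mem_unitaryGroup_norm_sq_eq_ite s
  have hsupp {i j : ι} (h : s i ≠ s j) : H i j = 0 := by
    simpa only [if_neg h, sq_eq_zero_iff, norm_eq_zero] using hHnorm i j
  obtain ⟨p, q, hpq⟩ := exists_injOn_add s hN
  have hinj : {x : ι × ι | H x.1 x.2 ≠ 0}.InjOn fun x => p x.1 + q x.2 :=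
    hpq.mono fun x hx => by_contra fun h => hx (hsupp h)
  let W := phaseTwist ZMod.stdAddChar p q ⟨H, hH⟩
  refine ⟨fun k => W (ZMod.finEquiv N k), fun k i j h => ?_, fun X => ?_⟩
  · simp only [W, phaseTwist_apply, hsupp h, mul_zero]
  calc mixedUnitary (fun k => W (ZMod.finEquiv N k)) X = mixedUnitary W X :=
        (ZMod.finEquiv N).toEquiv.sum_comp
          fun k => (W k : Matrix ι ι ℂ) * X * (W k : Matrix ι ι ℂ)ᴴ
    _ = _ := by
        rw [mixedUnitary_phaseTwist (ZMod.isPrimitive_stdAddChar N) hinj, ZMod.card]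
        congr 1 with i
        refine congrArg ((N : ℂ) * ·) ?_
        rw [Finset.mul_sum]
        refine Finset.sum_congr rfl fun j _ => ?_
        rw [← Complex.ofReal_pow, hHnorm]
        split_ifs <;> simp

end Fourier

section Involution

variable {ι : Type*} [Fintype ι] [DecidableEq ι]

theorem exists_eq_conj_diagonal_units {S : Matrix ι ι ℂ} (hS : S.IsHermitian) (hSS : S * S = 1) :
    ∃ (U : unitaryGroup ι ℂ) (ε : ι → ℤˣ),
      S = (U : Matrix ι ι ℂ) * diagonal (fun i => ((ε i : ℤ) : ℂ)) * (U : Matrix ι ι ℂ)ᴴ := by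
  let φ := Unitary.conjStarAlgAut ℂ (Matrix ι ι ℂ) hS.eigenvectorUnitary
  let D := diagonal fun i => (hS.eigenvalues i : ℂ)
  have hspec : S = φ D := hS.spectral_theorem
  have hsq : D * D = 1 := (EquivLike.injective φ) (by rw [map_mul, ← hspec, hSS, map_one])
  have hev (i : ι) : ∃ ε : ℤˣ, (hS.eigenvalues i : ℂ) = (ε : ℤ) := by
    rw [diagonal_mul_diagonal, diagonal_eq_one] at hsq
    rcases mul_self_eq_one_iff.1 (congrFun hsq i) with h | h
    · exact ⟨1, by simp [h]⟩
    · exact ⟨-1, by simp [h]⟩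
  choose ε hε using hev
  exact ⟨hS.eigenvectorUnitary, ε, by
    simpa only [D, hε, φ, Unitary.conjStarAlgAut_apply, star_eq_conjTranspose] using hspec⟩

theorem commute_diagonal_of_apply_eq_zero {A : Matrix ι ι ℂ} {d : ι → ℂ}
    (hA : ∀ i j, d i ≠ d j → A i j = 0) : Commute A (diagonal d) := by
  ext i j
  rw [mul_diagonal, diagonal_mul]
  rcases eq_or_ne (d i) (d j) with h | h
  · rw [h, mul_comm]
  · rw [hA i j h, zero_mul, mul_zero]

theorem ite_units_eq (a b : ℤˣ) (c : ℂ) :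
    (if a = b then c else 0) = (c + (a : ℤ) * ((b : ℤ) * c)) / 2 := by
  rcases Int.units_eq_one_or a with rfl | rfl <;> rcases Int.units_eq_one_or b with rfl | rfl <;>
    simp

theorem sum_ite_units_eq (ε : ι → ℤˣ) (X : Matrix ι ι ℂ) (i : ι) :
    (∑ j, if ε i = ε j then X j j else 0) =
      (trace X + (ε i : ℤ) * trace (diagonal (fun j => ((ε j : ℤ) : ℂ)) * X)) / 2 := by
  simp only [ite_units_eq, ← Finset.sum_div, Finset.sum_add_distrib, ← Finset.mul_sum, trace,
    diag_apply, diagonal_mul]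

theorem two_mul_card_units_eq (ε : ι → ℤˣ) :
    2 * (Fintype.card {x : ι × ι // ε x.1 = ε x.2} : ℂ) =
      Fintype.card ι ^ 2 + trace (diagonal fun i => ((ε i : ℤ) : ℂ)) ^ 2 := by
  rw [Fintype.card_subtype, ← Finset.sum_boole, Fintype.sum_prod_type]
  simp only [ite_units_eq, trace_diagonal, ← Finset.sum_div, Finset.sum_add_distrib,
    ← Finset.mul_sum, ← Finset.sum_mul, Finset.sum_const, Finset.card_univ, nsmul_eq_mul, mul_one]
  ring

theorem mixedUnitary_mul_mul_star (U : unitaryGroup ι ℂ) {τ : Type*} [Fintype τ]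
    (W : τ → unitaryGroup ι ℂ) (X : Matrix ι ι ℂ) :
    mixedUnitary (fun k => U * W k * U⁻¹) X =
      (U : Matrix ι ι ℂ) * mixedUnitary W ((U : Matrix ι ι ℂ)ᴴ * X * U) *
        (U : Matrix ι ι ℂ)ᴴ := by
  simp only [mixedUnitary_apply, Finset.mul_sum, Finset.sum_mul, UnitaryGroup.mul_val,
    UnitaryGroup.inv_val, star_eq_conjTranspose, conjTranspose_mul, conjTranspose_conjTranspose,
    Matrix.mul_assoc]

theorem trace_mul_conj_of_commute {S : Matrix ι ι ℂ} (U : unitaryGroup ι ℂ)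
    (hS : Commute (U : Matrix ι ι ℂ) S) (X : Matrix ι ι ℂ) :
    trace (S * ((U : Matrix ι ι ℂ) * X * (U : Matrix ι ι ℂ)ᴴ)) = trace (S * X) := by
  have hU : (U : Matrix ι ι ℂ)ᴴ * U = 1 := mem_unitaryGroup_iff'.1 U.2
  rw [← Matrix.mul_assoc, ← Matrix.mul_assoc, ← hS.eq, trace_mul_comm, ← Matrix.mul_assoc,
    ← Matrix.mul_assoc, hU, Matrix.one_mul]

theorem exists_mixedUnitary_commute_of_involution {S : Matrix ι ι ℂ} (hS : S.IsHermitian)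
    (hSS : S * S = 1) {N : ℕ} [NeZero N]
    (hN : 2 * (N : ℂ) = Fintype.card ι ^ 2 + trace S ^ 2) :
    ∃ W : Fin N → unitaryGroup ι ℂ, (∀ k, Commute (W k : Matrix ι ι ℂ) S) ∧
      ∀ X Y : Matrix ι ι ℂ, trace X = trace Y → trace (S * X) = trace (S * Y) →
        mixedUnitary W X = mixedUnitary W Y := by
  obtain ⟨U, ε, rfl⟩ := exists_eq_conj_diagonal_units hS hSS
  set u := (U : Matrix ι ι ℂ)
  set D := diagonal fun i => ((ε i : ℤ) : ℂ)
  have hu : uᴴ * u = 1 := mem_unitaryGroup_iff'.1 U.2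
  have hu' : u * uᴴ = 1 := mem_unitaryGroup_iff.1 U.2
  have hcard : Fintype.card {x : ι × ι // ε x.1 = ε x.2} = N := by
    rw [trace_mul_cycle, hu, Matrix.one_mul, ← two_mul_card_units_eq] at hN
    exact_mod_cast (mul_left_cancel₀ two_ne_zero hN).symm
  obtain ⟨W, hWsupp, hWsum⟩ := exists_mixedUnitary_eq_diagonal ε hcard
  refine ⟨fun k => U * W k * U⁻¹, fun k => ?_, fun X Y hXY hSXY => ?_⟩
  · have hWD : Commute (W k : Matrix ι ι ℂ) D :=
      commute_diagonal_of_apply_eq_zero fun i j h => hWsupp k i j fun hij => h (by rw [hij])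
    exact hWD.map (Unitary.conjStarAlgAut ℂ (Matrix ι ι ℂ) U)
  · have htrace (Z : Matrix ι ι ℂ) : trace (uᴴ * Z * u) = trace Z := by
      rw [trace_mul_cycle, hu', Matrix.one_mul]
    have hDtrace (Z : Matrix ι ι ℂ) : trace (D * (uᴴ * Z * u)) = trace (u * D * uᴴ * Z) := by
      rw [← Matrix.mul_assoc, trace_mul_comm]
      simp only [Matrix.mul_assoc]
    simp only [mixedUnitary_mul_mul_star, hWsum, sum_ite_units_eq]
    rw [htrace, htrace, hDtrace, hDtrace, hXY, hSXY]

end Involution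

section Twirl

variable {G κ : Type*} [Group G] [MeasurableSpace G] [Fintype κ] [DecidableEq κ]

/-- The twirl `X ↦ ∫ ρ(g) X ρ(g)ᴴ dμ(g)` of a unitary representation `ρ`, integrated entrywise. -/
noncomputable def twirl (μ : Measure G) (ρ : G →* unitaryGroup κ ℂ) (X : Matrix κ κ ℂ) :
    Matrix κ κ ℂ :=
  of fun i j => ∫ g, ((ρ g : Matrix κ κ ℂ) * X * (ρ g : Matrix κ κ ℂ)ᴴ) i j ∂μ

theorem twirl_apply (μ : Measure G) (ρ : G →* unitaryGroup κ ℂ) (X : Matrix κ κ ℂ) (i j : κ) :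
    twirl μ ρ X i j = ∫ g, ((ρ g : Matrix κ κ ℂ) * X * (ρ g : Matrix κ κ ℂ)ᴴ) i j ∂μ := rfl

variable {μ : Measure G} [IsFiniteMeasure μ] {ρ : G →* unitaryGroup κ ℂ}

theorem integrable_conj_apply (hρ : ∀ i j, Measurable fun g => (ρ g : Matrix κ κ ℂ) i j)
    (X : Matrix κ κ ℂ) (i j : κ) :
    Integrable (fun g => ((ρ g : Matrix κ κ ℂ) * X * (ρ g : Matrix κ κ ℂ)ᴴ) i j) μ := by
  have hentry (g : G) (i j : κ) : ‖(ρ g : Matrix κ κ ℂ) i j‖ ≤ 1 :=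
    entry_norm_bound_of_unitary (ρ g).2 i j
  simp only [mul_apply, conjTranspose_apply, Finset.sum_mul]
  refine integrable_finsetSum _ fun b _ => integrable_finsetSum _ fun a _ => ?_
  refine Integrable.of_bound (C := ‖X a b‖)
    (((hρ i a).mul_const _).mul
      (continuous_star.measurable.comp (hρ j b))).aestronglyMeasurable (.of_forall fun g => ?_)
  rw [norm_mul, norm_mul, norm_star]
  calc _ ≤ 1 * ‖X a b‖ * 1 := by gcongr <;> exact hentry g _ _
    _ = ‖X a b‖ := by ring

theorem linearMap_twirl_apply (hρ : ∀ i j, Measurable fun g => (ρ g : Matrix κ κ ℂ) i j)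
    (L : Matrix κ κ ℂ →ₗ[ℂ] Matrix κ κ ℂ) (X : Matrix κ κ ℂ) (i j : κ) :
    L (twirl μ ρ X) i j = ∫ g, L ((ρ g : Matrix κ κ ℂ) * X * (ρ g : Matrix κ κ ℂ)ᴴ) i j ∂μ := by
  obtain ⟨c, hc⟩ : ∃ c : κ → κ → ℂ, ∀ A, L A i j = ∑ a, ∑ b, A a b * c a b := by
    refine ⟨fun a b => L (single a b 1) i j, fun A => ?_⟩
    conv_lhs => rw [matrix_eq_sum_single A]
    simp only [map_sum, Matrix.sum_apply]
    refine Finset.sum_congr rfl fun a _ => Finset.sum_congr rfl fun b _ => ?_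
    rw [← smul_eq_mul, ← Matrix.smul_apply, ← map_smul, smul_single, smul_eq_mul, mul_one]
  have hintegrable (a b : κ) := (integrable_conj_apply (μ := μ) hρ X a b).mul_const (c a b)
  simp only [hc, twirl_apply, ← integral_mul_const]
  rw [integral_finsetSum _ fun a _ => integrable_finsetSum _ fun b _ => hintegrable a b]
  exact Finset.sum_congr rfl fun a _ => (integral_finsetSum _ fun b _ => hintegrable a b).symm

theorem commute_twirl [MeasurableMul G] [μ.IsMulLeftInvariant]
    (hρ : ∀ i j, Measurable fun g => (ρ g : Matrix κ κ ℂ) i j) (X : Matrix κ κ ℂ) (h : G) :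
    Commute (ρ h : Matrix κ κ ℂ) (twirl μ ρ X) := by
  have hconj : (ρ h : Matrix κ κ ℂ) * twirl μ ρ X * (ρ h : Matrix κ κ ℂ)ᴴ = twirl μ ρ X := by
    ext i j
    calc ((ρ h : Matrix κ κ ℂ) * twirl μ ρ X * (ρ h : Matrix κ κ ℂ)ᴴ) i j
        = ∫ g, ((ρ h : Matrix κ κ ℂ) * ((ρ g : Matrix κ κ ℂ) * X * (ρ g : Matrix κ κ ℂ)ᴴ) *
            (ρ h : Matrix κ κ ℂ)ᴴ) i j ∂μ := linearMap_twirl_apply hρ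
              (LinearMap.mulLeftRight ℂ ((ρ h : Matrix κ κ ℂ), (ρ h : Matrix κ κ ℂ)ᴴ)) X i j
      _ = ∫ g, ((ρ (h * g) : Matrix κ κ ℂ) * X * (ρ (h * g) : Matrix κ κ ℂ)ᴴ) i j ∂μ := by
        simp only [map_mul, UnitaryGroup.mul_val, conjTranspose_mul, Matrix.mul_assoc]
      _ = twirl μ ρ X i j := integral_mul_left_eq_self
        (fun g => ((ρ g : Matrix κ κ ℂ) * X * (ρ g : Matrix κ κ ℂ)ᴴ) i j) h
  have hunit : (ρ h : Matrix κ κ ℂ)ᴴ * ρ h = 1 := mem_unitaryGroup_iff'.1 (ρ h).2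
  calc (ρ h : Matrix κ κ ℂ) * twirl μ ρ X
      = (ρ h : Matrix κ κ ℂ) * twirl μ ρ X * (ρ h : Matrix κ κ ℂ)ᴴ * ρ h := by
        rw [Matrix.mul_assoc _ _ (ρ h : Matrix κ κ ℂ), hunit, Matrix.mul_one]
    _ = twirl μ ρ X * ρ h := by rw [hconj]

theorem mixedUnitary_eq_card_smul_twirl {τ : Type*} [Fintype τ] [IsProbabilityMeasure μ]
    (hρ : ∀ i j, Measurable fun g => (ρ g : Matrix κ κ ℂ) i j) {W : τ → unitaryGroup κ ℂ}
    {X : Matrix κ κ ℂ} (hW : ∀ k, Commute (W k : Matrix κ κ ℂ) (twirl μ ρ X))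
    (hinv : ∀ g, mixedUnitary W ((ρ g : Matrix κ κ ℂ) * X * (ρ g : Matrix κ κ ℂ)ᴴ) =
      mixedUnitary W X) :
    mixedUnitary W X = Fintype.card τ • twirl μ ρ X := by
  rw [← mixedUnitary_eq_card_smul_of_commute hW]
  ext i j
  simp only [linearMap_twirl_apply hρ, hinv, integral_const, probReal_univ, one_smul]

end Twirl

section Swap

variable {ι : Type*} [Fintype ι] [DecidableEq ι]

omit [Fintype ι] in
theorem isHermitian_swapMatrix : (swapMatrix ι).IsHermitian :=
  conjTranspose_permMatrix _

theorem swapMatrix_mul_self : swapMatrix ι * swapMatrix ι = 1 := by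
  have hσ : Equiv.prodComm ι ι * Equiv.prodComm ι ι = (1 : Equiv.Perm (ι × ι)) := rfl
  rw [swapMatrix, ← permMatrix_mul, hσ, permMatrix_one]

theorem trace_swapMatrix : trace (swapMatrix ι) = Fintype.card ι := by
  simp only [trace, diag_apply, swapMatrix_apply, Fintype.sum_prod_type, Prod.swap_prod_mk,
    Prod.mk.injEq, and_iff_right_of_imp Eq.symm, Finset.sum_ite_eq, Finset.mem_univ, if_true,
    Finset.sum_const, Finset.card_univ, nsmul_eq_mul, mul_one]

theorem commute_kronecker_self_swapMatrix (A : Matrix ι ι ℂ) :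
    Commute (A ⊗ₖ A) (swapMatrix ι) := by
  rw [Commute, SemiconjBy, PEquiv.toMatrix_toPEquiv_mul, PEquiv.mul_toMatrix_toPEquiv]
  ext p q
  exact mul_comm _ _

/-- The representation `U ↦ U ⊗ U` of the unitary group. -/
def tensorSquare : unitaryGroup ι ℂ →* unitaryGroup (ι × ι) ℂ where
  toFun U := ⟨(U : Matrix ι ι ℂ) ⊗ₖ (U : Matrix ι ι ℂ), kronecker_mem_unitary U.2 U.2⟩
  map_one' := Subtype.ext one_kronecker_one
  map_mul' _ _ := Subtype.ext (mul_kronecker_mul ..)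

theorem measurable_tensorSquare_apply [MeasurableSpace (unitaryGroup ι ℂ)]
    [BorelSpace (unitaryGroup ι ℂ)] (i j : ι × ι) :
    Measurable fun U : unitaryGroup ι ℂ => (tensorSquare U : Matrix (ι × ι) (ι × ι) ℂ) i j := by
  have hentry (a b : ι) : Continuous fun U : unitaryGroup ι ℂ => (U : Matrix ι ι ℂ) a b :=
    continuous_subtype_val.matrix_elem a b
  exact ((hentry i.1 j.1).mul (hentry i.2 j.2)).measurable

theorem exists_twirl_tensorSquare_eq [MeasurableSpace (unitaryGroup ι ℂ)]
    [BorelSpace (unitaryGroup ι ℂ)] (μ : Measure (unitaryGroup ι ℂ)) [IsFiniteMeasure μ]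
    [μ.IsMulLeftInvariant] (X : Matrix (ι × ι) (ι × ι) ℂ) :
    ∃ α β : ℂ, twirl μ tensorSquare X = α • 1 + β • swapMatrix ι :=
  exists_eq_smul_one_add_smul_swapMatrix fun V hV =>
    commute_twirl measurable_tensorSquare_apply X ⟨V, hV⟩

theorem exists_mixedUnitary_eq_smul_twirl_tensorSquare [MeasurableSpace (unitaryGroup ι ℂ)]
    [BorelSpace (unitaryGroup ι ℂ)] (μ : Measure (unitaryGroup ι ℂ)) [IsProbabilityMeasure μ]
    [μ.IsMulLeftInvariant] {N : ℕ} [NeZero N]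
    (hN : 2 * N = Fintype.card ι ^ 4 + Fintype.card ι ^ 2) :
    ∃ W : Fin N → unitaryGroup (ι × ι) ℂ,
      ∀ X, mixedUnitary W X = (N : ℂ) • twirl μ tensorSquare X := by
  have hN_trace : 2 * (N : ℂ) = Fintype.card (ι × ι) ^ 2 + trace (swapMatrix ι) ^ 2 := by
    rw [trace_swapMatrix, Fintype.card_prod, Nat.cast_mul, ← sq, ← pow_mul]
    exact_mod_cast hN
  obtain ⟨W, hW_swap, hW_trace⟩ :=
    exists_mixedUnitary_commute_of_involution isHermitian_swapMatrix swapMatrix_mul_self hN_trace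
  refine ⟨W, fun X => ?_⟩
  have hW_twirl (k : Fin N) :
      Commute (W k : Matrix (ι × ι) (ι × ι) ℂ) (twirl μ tensorSquare X) := by
    obtain ⟨α, β, hαβ⟩ := exists_twirl_tensorSquare_eq μ X
    rw [hαβ]
    exact ((Commute.one_right _).smul_right α).add_right ((hW_swap k).smul_right β)
  refine (mixedUnitary_eq_card_smul_twirl measurable_tensorSquare_apply hW_twirl
    fun U => hW_trace _ _ ?_ ?_).trans ?_
  · simpa only [Matrix.one_mul] using trace_mul_conj_of_commute _ (Commute.one_right _) X
  · exact trace_mul_conj_of_commute _ (commute_kronecker_self_swapMatrix _) X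
  · rw [Fintype.card_fin, Nat.cast_smul_eq_nsmul]

end Swap

/-- The Werner twirling channel admits a mixed-unitary decomposition
as a uniform average of `N = (n⁴ + n²)/2` unitary conjugations. -/
theorem stmt_18 (n : ℕ) (hn : 0 < n)
    [MeasurableSpace (Matrix.unitaryGroup (Fin n) ℂ)]
    [BorelSpace (Matrix.unitaryGroup (Fin n) ℂ)]
    (μ : Measure (Matrix.unitaryGroup (Fin n) ℂ))
    [μ.IsHaarMeasure] [IsProbabilityMeasure μ] :
    ∃ W : Fin ((n ^ 4 + n ^ 2) / 2) → Matrix (Fin n × Fin n) (Fin n × Fin n) ℂ,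
      (∀ k, (W k)ᴴ * W k = 1 ∧ W k * (W k)ᴴ = 1) ∧
      ∀ (X : Matrix (Fin n × Fin n) (Fin n × Fin n) ℂ) (i j : Fin n × Fin n),
        (∫ U : Matrix.unitaryGroup (Fin n) ℂ,
          (((U : Matrix (Fin n) (Fin n) ℂ) ⊗ₖ (U : Matrix (Fin n) (Fin n) ℂ)) * X *
            ((U : Matrix (Fin n) (Fin n) ℂ) ⊗ₖ (U : Matrix (Fin n) (Fin n) ℂ))ᴴ) i j ∂μ) =
        ((1 / ((((n ^ 4 + n ^ 2) / 2 : ℕ)) : ℂ)) • ∑ k, W k * X * (W k)ᴴ) i j := by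
  have hN : 2 * ((n ^ 4 + n ^ 2) / 2) = n ^ 4 + n ^ 2 :=
    Nat.mul_div_cancel' (even_iff_two_dvd.1 (by simp [parity_simps]))
  set N := (n ^ 4 + n ^ 2) / 2
  have hpos : 0 < n ^ 4 + n ^ 2 := by positivity
  have : NeZero N := ⟨by lia⟩
  obtain ⟨W, hW⟩ := exists_mixedUnitary_eq_smul_twirl_tensorSquare μ (N := N)
    (by rwa [Fintype.card_fin])
  refine ⟨fun k => W k, fun k => ⟨mem_unitaryGroup_iff'.1 (W k).2,
    mem_unitaryGroup_iff.1 (W k).2⟩, fun X i j => ?_⟩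
  rw [one_div, ← mixedUnitary_apply W, hW, inv_smul_smul₀ (Nat.cast_ne_zero.2 (NeZero.ne N))]
  rfl
end
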